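/- arXiv:1211.2118 — 2 statements merged into one kernel-verified Lean document; each statement's English description precedes it below -/
import Mathlib

section
/- Let S be a finite set of n ≥ 1 pairwise disjoint nondegenerate closed line segments in ℝ², such that no three of the 2n segment endpoints lie on a common line. Then there exists a simple graph T on the set V of the 2n segment endpoints such that: T is a tree (connected and acyclic); for every segment of S, its two endpoints form an edge of T; every vertex of T has degree at most 3; and the edges of T, drawn as closed straight segments between their endpoints, are pairwise non-crossing: any two distinct edge segments intersect only in a shared endpoint, and no edge segment contains a point of V other than its two endpoints. -/
open Set

/-- Degree of a vertex in a graph. -/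
noncomputable def ndeg {V : Type*} (G : SimpleGraph V) (v : V) : ℕ := {w | G.Adj v w}.ncard

/-!
Shear the plane so that all abscissae are distinct, add one long segment below and one above all the
others, and sweep a vertical line from left to right. Connecting edges are only drawn from an
endpoint on the left to an endpoint on the right of a common gap between two vertically neighbouring
segments, so the drawing stays plane.

For each segment `u` bordering a gap from above, at most one endpoint on the left side of the gap
promises an edge to some endpoint that the line will meet later; until then `u` stands in for that
endpoint, so that every endpoint passed is linked to the top segment. When the line reaches the left
end `a` of a segment, the author of the promise at the segment above is joined to `a`, which makes
the next promise itself. When it reaches a right end `a`, the author of the promise at the segment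
ending there is joined to `a`. Then the promise at the segment above `a` is dropped and replaced by
one of `a` if this separates nothing; otherwise its author is joined to `a`, and by an exchange
argument everything stays linked, as `a` reaches the segment above without that promise. Hence every
endpoint gets at most two connecting edges. In the end at most one promise, at the top segment,
is left; removing the top segment keeps the rest connected, and a spanning tree containing the
segments has degree at most three.
-/

section Graphs

variable {V W ι : Type*}

lemma ncard_setOf_and_eq (P : Prop) [Decidable P] (x : V) :
    {y | P ∧ y = x}.ncard = if P then 1 else 0 := by
  split_ifs with hP <;> simp [hP]

lemma ndeg_mono [Finite V] {G H : SimpleGraph V} (h : G ≤ H) (v : V) : ndeg G v ≤ ndeg H v :=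
  ncard_le_ncard fun _ hw => h hw

lemma ndeg_sup_le (G H : SimpleGraph V) (v : V) : ndeg (G ⊔ H) v ≤ ndeg G v + ndeg H v :=
  ncard_union_le {w | G.Adj v w} {w | H.Adj v w}

lemma ndeg_comap_le [Finite W] (G : SimpleGraph W) {f : V → W} (hf : f.Injective) (v : V) :
    ndeg (G.comap f) v ≤ ndeg G (f v) :=
  ncard_le_ncard_of_injOn f (fun _ hw => hw) hf.injOn

lemma reachable_of_adj_reachable {G H : SimpleGraph V} (h : ∀ x y, G.Adj x y → H.Reachable x y)
    {x y : V} (hxy : G.Reachable x y) : H.Reachable x y := by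
  obtain ⟨w⟩ := hxy
  induction w with
  | nil => rfl
  | cons hadj _ ih => exact (h _ _ hadj).trans ih

/-- The exchange argument: a walk towards `s` either avoids the edge `st`, or first meets it at
`s` or at `t`. -/
lemma reachable_or_reachable_of_le_sup_edge {G H : SimpleGraph V} {s t x : V}
    (h : G ≤ H ⊔ SimpleGraph.edge s t) (hx : G.Reachable x s) :
    H.Reachable x s ∨ H.Reachable x t := by
  obtain ⟨w⟩ := hx
  induction w with
  | nil => exact Or.inl .rfl
  | cons hadj _ ih =>
    rcases h hadj with hH | hst
    · exact (ih h).imp hH.reachable.trans hH.reachable.trans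
    · rcases ((SimpleGraph.edge_adj ..).1 hst).1 with ⟨rfl, -⟩ | ⟨rfl, -⟩
      · exact Or.inl .rfl
      · exact Or.inr .rfl

lemma exists_reachable_comap {G : SimpleGraph W} {f : V → W}
    (hf : ∀ a y, G.Adj (f a) y → y ∈ range f) {a : V} {y : W} (h : G.Reachable (f a) y) :
    ∃ b, f b = y ∧ (G.comap f).Reachable a b := by
  obtain ⟨w⟩ := h
  generalize hx : f a = x at w
  induction w generalizing a with
  | nil => exact ⟨a, hx, .rfl⟩
  | cons hadj _ ih =>
    subst hx
    obtain ⟨c, rfl⟩ := hf a _ hadj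
    obtain ⟨b, hb, hcb⟩ := ih rfl
    exact ⟨b, hb, (SimpleGraph.Adj.reachable (G := G.comap f) hadj).trans hcb⟩

/-- The perfect matching on the endpoints of a family of segments: the two ends `(i, false)` and
`(i, true)` of segment `i` are adjacent. -/
def endpointMatching (ι : Type*) : SimpleGraph (ι × Bool) where
  Adj v w := v.1 = w.1 ∧ v ≠ w
  symm := ⟨fun _ _ h => ⟨h.1.symm, h.2.symm⟩⟩
  loopless := ⟨fun _ h => h.2 rfl⟩

lemma endpointMatching_adj {v w : ι × Bool} :
    (endpointMatching ι).Adj v w ↔ v.1 = w.1 ∧ v ≠ w := Iff.rfl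

lemma endpointMatching_adj_iff_eq {v w : ι × Bool} :
    (endpointMatching ι).Adj v w ↔ w = (v.1, !v.2) := by
  obtain ⟨i, a⟩ := v
  obtain ⟨j, b⟩ := w
  cases a <;> cases b <;> simp [endpointMatching_adj, eq_comm]

lemma ndeg_endpointMatching (v : ι × Bool) : ndeg (endpointMatching ι) v = 1 := by
  simp only [ndeg, endpointMatching_adj_iff_eq, ofPred_eq_eq_singleton, ncard_singleton]

lemma isAcyclic_endpointMatching : (endpointMatching ι).IsAcyclic := fun v w hw => by
  have hsnd := endpointMatching_adj_iff_eq.1 (w.adj_snd hw.not_nil)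
  have hpen := endpointMatching_adj_iff_eq.1 (w.adj_penultimate hw.not_nil).symm
  exact hw.snd_ne_penultimate (hsnd.trans hpen.symm)

end Graphs

section Promises

variable {ι : Type*}

/-- The edges promised by `p`: if `p u = some v`, then `v` will be joined to some endpoint below
segment `u`, which until then is represented by the left end of `u`. -/
def promiseGraph (p : ι → Option (ι × Bool)) : SimpleGraph (ι × Bool) :=
  SimpleGraph.fromRel fun v w => w.2 = false ∧ p w.1 = some v

/-- The graph whose connectivity the sweep maintains: segments, connectors and promised edges. -/
def link (G : SimpleGraph (ι × Bool)) (p : ι → Option (ι × Bool)) : SimpleGraph (ι × Bool) :=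
  endpointMatching ι ⊔ G ⊔ promiseGraph p

/-- The number of connectors at `v`, including promised ones. -/
noncomputable def load (G : SimpleGraph (ι × Bool)) (p : ι → Option (ι × Bool))
    (v : ι × Bool) : ℕ :=
  ndeg G v + {u | p u = some v}.ncard

/-- The graph obtained from `G` by adding the edge from `v` to `a` if `p u = some v`. -/
def honour (G : SimpleGraph (ι × Bool)) (p : ι → Option (ι × Bool)) (u : ι) (a : ι × Bool) :
    SimpleGraph (ι × Bool) :=
  G ⊔ SimpleGraph.fromRel fun v w => p u = some v ∧ w = a

variable {G H : SimpleGraph (ι × Bool)} {p : ι → Option (ι × Bool)} {u : ι} {a v w x y : ι × Bool}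

lemma honour_adj_iff : (honour G p u a).Adj v w ↔
    G.Adj v w ∨ v ≠ w ∧ (p u = some v ∧ w = a ∨ p u = some w ∧ v = a) := by
  simp only [honour, SimpleGraph.sup_adj, SimpleGraph.fromRel_adj]

lemma link_mono (h : G ≤ H) : link G p ≤ link H p := sup_le_sup_right (sup_le_sup_left h _) _

lemma link_le_of_forall_eq_none (hp : ∀ u, p u = none) : link G p ≤ endpointMatching ι ⊔ G :=
  sup_le le_rfl fun v w h => by simp [promiseGraph, hp] at h

lemma reachable_link_of_fst_eq (h : v.1 = w.1) : (link G p).Reachable v w := by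
  by_cases hvw : v = w
  · rw [hvw]
  · exact SimpleGraph.Adj.reachable (Or.inl (Or.inl ⟨h, hvw⟩))

lemma reachable_link_promise (h : p u = some v) : (link G p).Reachable v (u, false) := by
  by_cases hv : v = (u, false)
  · rw [hv]
  · exact SimpleGraph.Adj.reachable (Or.inr ⟨hv, Or.inl ⟨rfl, h⟩⟩)

lemma reachable_honour (h : p u = some v) : (honour G p u a).Reachable v a := by
  by_cases hv : v = a
  · rw [hv]
  · exact SimpleGraph.Adj.reachable (honour_adj_iff.2 (Or.inr ⟨hv, Or.inl ⟨h, rfl⟩⟩))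

variable [DecidableEq ι]

lemma update_none_eq_some_iff {i : ι} :
    Function.update p u none i = some v ↔ i ≠ u ∧ p i = some v := by
  by_cases h : i = u <;> simp [h]

lemma link_update_none_le (q : Option (ι × Bool)) :
    link G (Function.update p u none) ≤ link G (Function.update p u q) := by
  refine sup_le_sup_left (fun v w h => ⟨h.1, h.2.imp ?_ ?_⟩) _ <;>
  · rintro ⟨hfalse, hp⟩
    obtain ⟨hne, hp⟩ := update_none_eq_some_iff.1 hp
    exact ⟨hfalse, by rwa [Function.update_of_ne hne]⟩

lemma link_adj_update_none_or (h : (link G p).Adj x y) :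
    (link G (Function.update p u none)).Adj x y ∨
      p u = some x ∧ y = (u, false) ∨ p u = some y ∧ x = (u, false) := by
  rcases h with h | ⟨hne, ⟨hfalse, hp⟩ | ⟨hfalse, hp⟩⟩
  · exact Or.inl (Or.inl h)
  · by_cases hu : y.1 = u
    · exact Or.inr (Or.inl ⟨hu ▸ hp, Prod.ext hu hfalse⟩)
    · exact Or.inl (Or.inr ⟨hne, Or.inl ⟨hfalse, update_none_eq_some_iff.2 ⟨hu, hp⟩⟩⟩)
  · by_cases hu : x.1 = u
    · exact Or.inr (Or.inr ⟨hu ▸ hp, Prod.ext hu hfalse⟩)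
    · exact Or.inl (Or.inr ⟨hne, Or.inr ⟨hfalse, update_none_eq_some_iff.2 ⟨hu, hp⟩⟩⟩)

lemma link_le_sup_edge (hu : p u = some v) :
    link G p ≤ link G (Function.update p u none) ⊔ SimpleGraph.edge (u, false) v := by
  intro x y h
  refine (link_adj_update_none_or (u := u) h).imp_right fun h' =>
    (SimpleGraph.edge_adj ..).2 ⟨?_, h.ne⟩
  rcases h' with ⟨hx, hy⟩ | ⟨hy, hx⟩
  · exact Or.inr ⟨Option.some.inj (hx ▸ hu), hy⟩
  · exact Or.inl ⟨hx, Option.some.inj (hy ▸ hu)⟩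

lemma reachable_of_link (hH : link G (Function.update p u none) ≤ H)
    (hu : ∀ v, p u = some v → H.Reachable v (u, false)) (hxy : (link G p).Reachable x y) :
    H.Reachable x y := by
  refine reachable_of_adj_reachable (fun x y h => ?_) hxy
  rcases link_adj_update_none_or (u := u) h with h | ⟨hx, rfl⟩ | ⟨hy, rfl⟩
  · exact (hH h).reachable
  · exact hu x hx
  · exact (hu y hy).symm

lemma reachable_of_link_honour (hH : link (honour G p u a) (Function.update p u none) ≤ H)
    (ha : H.Reachable a (u, false)) (hxy : (link G p).Reachable x y) : H.Reachable x y :=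
  reachable_of_link ((link_mono le_sup_left).trans hH) (fun _ hv =>
    ((reachable_honour hv).mono ((le_sup_of_le_left le_sup_right).trans hH)).trans ha) hxy

variable [Finite ι]

lemma load_update_none_le : load G (Function.update p u none) v ≤ load G p v :=
  Nat.add_le_add_left (ncard_le_ncard fun _ h => (update_none_eq_some_iff.1 h).2) _

lemma load_update_some_le :
    load G (Function.update p u (some a)) v ≤ load G p v + if v = a then 1 else 0 := by
  rw [load, load, Nat.add_assoc, ← ncard_setOf_and_eq (v = a) u]
  refine Nat.add_le_add_left ((ncard_le_ncard fun i hi => ?_).trans (ncard_union_le _ _)) _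
  by_cases hiu : i = u
  · subst hiu
    exact Or.inr ⟨by simpa [eq_comm] using hi, rfl⟩
  · exact Or.inl (by simpa [hiu] using hi)

lemma ndeg_honour_le : ndeg (honour G p u a) v ≤
    ndeg G v + (if p u = some v then 1 else 0) + if v = a then 1 else 0 := by
  have hcard : {w | v = a ∧ p u = some w}.ncard ≤ if v = a then 1 else 0 := by
    split_ifs with hva
    · exact (ncard_le_one_iff).2 fun hw hw' => Option.some.inj (hw.2.symm.trans hw'.2)
    · simp [hva]
  rw [← ncard_setOf_and_eq (p u = some v) a]
  refine (ncard_le_ncard (t := {w | G.Adj v w} ∪ {w | p u = some v ∧ w = a} ∪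
    {w | v = a ∧ p u = some w}) fun w hw => ?_).trans <| (ncard_union_le _ _).trans <|
    Nat.add_le_add (ncard_union_le _ _) hcard
  rcases honour_adj_iff.1 hw with h | ⟨-, h | h⟩
  exacts [Or.inl (Or.inl h), Or.inl (Or.inr h), Or.inr h.symm]

/-- A promise made by `v` already counts towards the load of `v`, so only the load of `a` grows. -/
lemma load_honour_le : load (honour G p u a) (Function.update p u none) v ≤
    load G p v + if v = a then 1 else 0 := by
  have hcard : (if p u = some v then 1 else 0) +
      {i | Function.update p u none i = some v}.ncard = {i | p i = some v}.ncard := by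
    simp only [update_none_eq_some_iff]
    split_ifs with hu
    · rw [Nat.add_comm, ← ncard_sdiff_singleton_add_one (s := {i | p i = some v}) hu]
      exact congrArg (ncard · + 1) (ext fun i => and_comm)
    · rw [Nat.zero_add]
      exact congrArg ncard (ext fun i => and_iff_right_of_imp (by rintro hi rfl; exact hu hi))
  have := ndeg_honour_le (G := G) (p := p) (u := u) (a := a) (v := v)
  unfold load
  lia

end Promises

section PlaneDrawings

variable {V W E F : Type*} [AddCommGroup E] [Module ℝ E] [AddCommGroup F] [Module ℝ F]

/-- The straight-line drawing of `G` which places the vertex `v` at the point `p v` is plane: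
distinct edges meet only in common ends, and no edge passes through a vertex. -/
structure IsPlaneDrawing (p : V → E) (G : SimpleGraph V) : Prop where
  inter_subset : ∀ ⦃a b c d⦄, G.Adj a b → G.Adj c d → s(a, b) ≠ s(c, d) →
    segment ℝ (p a) (p b) ∩ segment ℝ (p c) (p d) ⊆ {p a, p b} ∩ {p c, p d}
  eq_or_eq : ∀ ⦃a b v⦄, G.Adj a b → p v ∈ segment ℝ (p a) (p b) → v = a ∨ v = b

namespace IsPlaneDrawing

lemma mono {p : V → E} {G H : SimpleGraph V} (hH : IsPlaneDrawing p H) (h : G ≤ H) :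
    IsPlaneDrawing p G where
  inter_subset _ _ _ _ hab hcd := hH.inter_subset (h hab) (h hcd)
  eq_or_eq _ _ _ hab := hH.eq_or_eq (h hab)

lemma comap {p : W → E} {G : SimpleGraph W} (hG : IsPlaneDrawing p G) {f : V → W}
    (hf : f.Injective) : IsPlaneDrawing (p ∘ f) (G.comap f) where
  inter_subset _ _ _ _ hab hcd hne := hG.inter_subset hab hcd fun h =>
    hne (Sym2.map.injective hf (by simpa only [Sym2.map_mk] using h))
  eq_or_eq _ _ _ hab hv := (hG.eq_or_eq hab hv).imp (@hf _ _) (@hf _ _)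

lemma of_affineMap_comp {p : V → E} {G : SimpleGraph V} {A : E →ᵃ[ℝ] F}
    (hA : Function.Injective A) (hG : IsPlaneDrawing (A ∘ p) G) : IsPlaneDrawing p G where
  inter_subset a b c d hab hcd hne z hz := by
    have himage : ∀ {x y}, z ∈ segment ℝ (p x) (p y) →
        A z ∈ segment ℝ ((A ∘ p) x) ((A ∘ p) y) := fun {x y} hz =>
      image_segment ℝ A (p x) (p y) ▸ mem_image_of_mem A hz
    simpa [hA.eq_iff] using hG.inter_subset hab hcd hne ⟨himage hz.1, himage hz.2⟩
  eq_or_eq a b v hab hv :=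
    hG.eq_or_eq hab (image_segment ℝ A (p a) (p b) ▸ mem_image_of_mem A hv)

end IsPlaneDrawing

end PlaneDrawings

section Chords

/-- The ordinate at abscissa `x` of the line through `p` and `q` (the horizontal line through `p`
if `p` and `q` have the same abscissa). -/
noncomputable def chord (p q : ℝ × ℝ) (x : ℝ) : ℝ :=
  p.2 + (q.2 - p.2) / (q.1 - p.1) * (x - p.1)

variable {p q : ℝ × ℝ}

lemma chord_left : chord p q p.1 = p.2 := by simp [chord]

lemma chord_right (h : p.1 < q.1) : chord p q q.1 = q.2 := by
  simp [chord, (sub_pos.2 h).ne']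

lemma continuous_chord : Continuous (chord p q) := by
  unfold chord
  fun_prop

lemma mem_segment_iff_chord (h : p.1 < q.1) {z : ℝ × ℝ} :
    z ∈ segment ℝ p q ↔ z.1 ∈ Icc p.1 q.1 ∧ z.2 = chord p q z.1 := by
  have hpq : 0 < q.1 - p.1 := sub_pos.2 h
  rw [segment_eq_image']
  constructor
  · rintro ⟨t, ⟨ht₀, ht₁⟩, rfl⟩
    refine ⟨⟨?_, ?_⟩, ?_⟩
    · simpa using mul_nonneg ht₀ hpq.le
    · simpa using (by nlinarith : p.1 + t * (q.1 - p.1) ≤ q.1)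
    · simp only [chord, Prod.snd_add, Prod.fst_add, Prod.smul_snd, Prod.smul_fst, Prod.snd_sub,
        Prod.fst_sub, smul_eq_mul]
      field_simp
      ring
  · rintro ⟨⟨hpz, hzq⟩, hz⟩
    refine ⟨(z.1 - p.1) / (q.1 - p.1), ⟨by positivity [sub_nonneg.2 hpz], ?_⟩, ?_⟩
    · rw [div_le_one hpq]
      linarith
    · ext
      · simp [hpq.ne']
      · simp only [Prod.snd_add, Prod.smul_snd, Prod.snd_sub, smul_eq_mul, hz, chord]
        ring

lemma chord_mul_sub (a b x : ℝ) :
    chord p q x * (b - a) = chord p q a * (b - x) + chord p q b * (x - a) := by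
  unfold chord
  ring

variable {p' q' : ℝ × ℝ} {a b x : ℝ}

lemma chord_lt_chord (hx : x ∈ Ioo a b) (ha : chord p q a ≤ chord p' q' a)
    (hb : chord p q b ≤ chord p' q' b)
    (hne : chord p q a < chord p' q' a ∨ chord p q b < chord p' q' b) :
    chord p q x < chord p' q' x := by
  obtain ⟨hax, hxb⟩ := hx
  refine lt_of_mul_lt_mul_right ?_ (sub_nonneg.2 (hax.trans hxb).le)
  rw [chord_mul_sub a b, chord_mul_sub a b]
  rcases hne with hne | hne <;> nlinarith

end Chords

/-! ### Gaps and corridors -/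

/-- Pairwise disjoint segments in the plane, all of whose endpoints have different abscissae:
`pt (i, false)` is the left end of segment `i` and `pt (i, true)` its right end. -/
structure SegmentFamily (ι : Type*) where
  pt : ι × Bool → ℝ × ℝ
  left_lt_right : ∀ i, (pt (i, false)).1 < (pt (i, true)).1
  disjoint : Pairwise fun i j =>
    Disjoint (segment ℝ (pt (i, false)) (pt (i, true))) (segment ℝ (pt (j, false)) (pt (j, true)))
  injective_fst : Function.Injective fun v => (pt v).1

namespace SegmentFamily

variable {ι : Type*} (c : SegmentFamily ι)

/-- The abscissa of an endpoint. -/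
def X (v : ι × Bool) : ℝ := (c.pt v).1

/-- The ordinate of an endpoint. -/
def Y (v : ι × Bool) : ℝ := (c.pt v).2

/-- The projection of segment `i` to the horizontal axis. -/
def span (i : ι) : Set ℝ := Icc (c.X (i, false)) (c.X (i, true))

/-- The function whose graph over `c.span i` is segment `i`. -/
noncomputable def height (i : ι) : ℝ → ℝ := chord (c.pt (i, false)) (c.pt (i, true))

variable {c} {i j l u : ι} {v w : ι × Bool} {x y a b : ℝ}

lemma eq_of_X_eq (h : c.X v = c.X w) : v = w := c.injective_fst h

lemma pt_injective : Function.Injective c.pt := fun _ _ h => eq_of_X_eq (congrArg Prod.fst h)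

lemma mem_segment_iff {z : ℝ × ℝ} : z ∈ segment ℝ (c.pt (i, false)) (c.pt (i, true)) ↔
    z.1 ∈ c.span i ∧ z.2 = c.height i z.1 :=
  mem_segment_iff_chord (c.left_lt_right i)

lemma pt_mem_segment (v : ι × Bool) :
    c.pt v ∈ segment ℝ (c.pt (v.1, false)) (c.pt (v.1, true)) := by
  rcases v with ⟨i, _ | _⟩
  exacts [left_mem_segment .., right_mem_segment ..]

lemma X_mem_span (v : ι × Bool) : c.X v ∈ c.span v.1 := (mem_segment_iff.1 (pt_mem_segment v)).1

lemma height_X (v : ι × Bool) : c.height v.1 (c.X v) = c.Y v :=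
  (mem_segment_iff.1 (pt_mem_segment v)).2.symm

lemma eq_of_mem_segment {z : ℝ × ℝ} (hi : z ∈ segment ℝ (c.pt (i, false)) (c.pt (i, true)))
    (hj : z ∈ segment ℝ (c.pt (j, false)) (c.pt (j, true))) : i = j := by
  by_contra hij
  exact disjoint_left.1 (c.disjoint hij) hi hj

lemma eq_of_height_eq (hi : x ∈ c.span i) (hj : x ∈ c.span j)
    (h : c.height i x = c.height j x) : i = j :=
  eq_of_mem_segment (z := (x, c.height i x)) (mem_segment_iff.2 ⟨hi, rfl⟩)
    (mem_segment_iff.2 ⟨hj, h⟩)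

lemma eq_of_height_eq_Y (hi : c.X v ∈ c.span i) (h : c.height i (c.X v) = c.Y v) : i = v.1 :=
  eq_of_height_eq hi (X_mem_span v) (h.trans (height_X v).symm)

lemma height_lt_of_height_lt (hxi : x ∈ c.span i) (hxj : x ∈ c.span j) (hyi : y ∈ c.span i)
    (hyj : y ∈ c.span j) (h : c.height i x < c.height j x) : c.height i y < c.height j y := by
  by_contra! hle
  obtain ⟨z, ⟨hzi, hzj⟩, hz⟩ :=
    (ordConnected_Icc.inter ordConnected_Icc).isPreconnected.intermediate_value₂
      (a := x) (b := y) (s := c.span i ∩ c.span j) ⟨hxi, hxj⟩ ⟨hyi, hyj⟩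
      continuous_chord.continuousOn continuous_chord.continuousOn h.le hle
  obtain rfl := eq_of_height_eq hzi hzj hz
  exact lt_irrefl _ h

lemma X_notMem_Ioo_of_Icc_subset_span (h : Icc a b ⊆ c.span v.1) : c.X v ∉ Ioo a b := by
  rintro ⟨hav, hvb⟩
  have ha := (h (left_mem_Icc.2 (hav.trans hvb).le)).1
  have hb := (h (right_mem_Icc.2 (hav.trans hvb).le)).2
  rcases v with ⟨i, _ | _⟩ <;> linarith

variable (c) in
/-- Over `[a, b]` the segments `l` and `u` bound a region which no other segment of the family
enters. -/
structure IsGap (l u : ι) (a b : ℝ) : Prop where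
  floor : Icc a b ⊆ c.span l
  ceil : Icc a b ⊆ c.span u
  free : ∀ x ∈ Ioo a b, ∀ s, x ∈ c.span s →
    c.height s x ≤ c.height l x ∨ c.height u x ≤ c.height s x

variable (c) in
/-- The endpoints `v` and `w` lie on the left and on the right side of a common gap. -/
structure Corridor (l u : ι) (v w : ι × Bool) : Prop where
  lt : c.X v < c.X w
  ne : v.1 ≠ w.1
  gap : c.IsGap l u (c.X v) (c.X w)
  left : c.Y v ∈ Icc (c.height l (c.X v)) (c.height u (c.X v))
  right : c.Y w ∈ Icc (c.height l (c.X w)) (c.height u (c.X w))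

lemma IsGap.X_notMem_Ioo (hg : c.IsGap l u a b)
    (hv : c.Y v ∈ Icc (c.height l (c.X v)) (c.height u (c.X v))) : c.X v ∉ Ioo a b := by
  intro hab
  have hIcc := Ioo_subset_Icc_self hab
  rcases hg.free _ hab v.1 (X_mem_span v) with h | h <;> rw [height_X] at h
  · obtain rfl := eq_of_height_eq_Y (hg.floor hIcc) (hv.1.antisymm h)
    exact X_notMem_Ioo_of_Icc_subset_span hg.floor hab
  · obtain rfl := eq_of_height_eq_Y (hg.ceil hIcc) (h.antisymm hv.2)
    exact X_notMem_Ioo_of_Icc_subset_span hg.ceil hab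

namespace Corridor

variable {l' u' : ι} {v' w' : ι × Bool} {z : ℝ × ℝ}

lemma chord_mem_Ioo (hc : c.Corridor l u v w) (hx : x ∈ Ioo (c.X v) (c.X w)) :
    chord (c.pt v) (c.pt w) x ∈ Ioo (c.height l x) (c.height u x) := by
  have hv : chord (c.pt v) (c.pt w) (c.X v) = c.Y v := chord_left
  have hw : chord (c.pt v) (c.pt w) (c.X w) = c.Y w := chord_right hc.lt
  have hvI := left_mem_Icc.2 hc.lt.le
  have hwI := right_mem_Icc.2 hc.lt.le
  constructor
  · refine chord_lt_chord hx (hv ▸ hc.left.1) (hw ▸ hc.right.1) ?_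
    by_contra! h
    have hlv := eq_of_height_eq_Y (hc.gap.floor hvI) (hc.left.1.antisymm (hv ▸ h.1))
    have hlw := eq_of_height_eq_Y (hc.gap.floor hwI) (hc.right.1.antisymm (hw ▸ h.2))
    exact hc.ne (hlv.symm.trans hlw)
  · refine chord_lt_chord hx (hv ▸ hc.left.2) (hw ▸ hc.right.2) ?_
    by_contra! h
    have huv := eq_of_height_eq_Y (hc.gap.ceil hvI) ((hv ▸ h.1).antisymm hc.left.2)
    have huw := eq_of_height_eq_Y (hc.gap.ceil hwI) ((hw ▸ h.2).antisymm hc.right.2)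
    exact hc.ne (huv.symm.trans huw)

lemma eq_pt_or_eq_pt_or_strict (hc : c.Corridor l u v w)
    (hz : z ∈ segment ℝ (c.pt v) (c.pt w)) :
    z = c.pt v ∨ z = c.pt w ∨
      z.1 ∈ Ioo (c.X v) (c.X w) ∧ z.2 ∈ Ioo (c.height l z.1) (c.height u z.1) := by
  obtain ⟨⟨hvz, hzw⟩, hz₂⟩ := (mem_segment_iff_chord hc.lt).1 hz
  rcases hvz.eq_or_lt with h | hvz
  · exact Or.inl (Prod.ext h.symm (by rw [hz₂, ← h, chord_left]))
  rcases hzw.eq_or_lt with h | hzw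
  · exact Or.inr (Or.inl (Prod.ext h (by rw [hz₂, h, chord_right hc.lt])))
  · exact Or.inr (Or.inr ⟨⟨hvz, hzw⟩, hz₂ ▸ hc.chord_mem_Ioo ⟨hvz, hzw⟩⟩)

lemma eq_pt_of_mem_segment (hc : c.Corridor l u v w) (hz : z ∈ segment ℝ (c.pt v) (c.pt w))
    (hi : z ∈ segment ℝ (c.pt (i, false)) (c.pt (i, true))) :
    z = c.pt v ∧ i = v.1 ∨ z = c.pt w ∧ i = w.1 := by
  rcases hc.eq_pt_or_eq_pt_or_strict hz with rfl | rfl | ⟨hzI, hzl, hzu⟩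
  · exact Or.inl ⟨rfl, eq_of_mem_segment hi (pt_mem_segment v)⟩
  · exact Or.inr ⟨rfl, eq_of_mem_segment hi (pt_mem_segment w)⟩
  · obtain ⟨hspan, hz₂⟩ := mem_segment_iff.1 hi
    rcases hc.gap.free _ hzI i hspan with h | h <;> linarith

lemma eq_or_eq_of_pt_mem_segment (hc : c.Corridor l u v w)
    (hv' : c.pt v' ∈ segment ℝ (c.pt v) (c.pt w)) : v' = v ∨ v' = w :=
  (hc.eq_pt_of_mem_segment hv' (pt_mem_segment v')).imp (fun h => pt_injective h.1)
    fun h => pt_injective h.1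

lemma le_X_of_mem_Ioo (hc : c.Corridor l u v w) (hc' : c.Corridor l u v' w')
    (hx : x ∈ Ioo (c.X v) (c.X w)) (hx' : x ∈ Ioo (c.X v') (c.X w')) :
    c.X v' ≤ c.X v ∧ c.X w ≤ c.X w' := by
  constructor <;> by_contra! h
  · exact hc.gap.X_notMem_Ioo hc'.left ⟨h, hx'.1.trans hx.2⟩
  · exact hc.gap.X_notMem_Ioo hc'.right ⟨hx.1.trans hx'.2, h⟩

/-- Gaps meeting in a point off the segments have the same floor and the same ceiling, and
then neither of them can contain an end of the other corridor in its interior. -/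
lemma eq_and_eq_of_strict (hc : c.Corridor l u v w) (hc' : c.Corridor l' u' v' w')
    (hx : x ∈ Ioo (c.X v) (c.X w)) (hx' : x ∈ Ioo (c.X v') (c.X w'))
    (hy : y ∈ Ioo (c.height l x) (c.height u x))
    (hy' : y ∈ Ioo (c.height l' x) (c.height u' x)) : v = v' ∧ w = w' := by
  have hI := Ioo_subset_Icc_self hx
  have hI' := Ioo_subset_Icc_self hx'
  have hl : l = l' := eq_of_height_eq (hc.gap.floor hI) (hc'.gap.floor hI') <|
    le_antisymm
      ((hc'.gap.free x hx' l (hc.gap.floor hI)).resolve_right (by linarith [hy.1, hy'.2]))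
      ((hc.gap.free x hx l' (hc'.gap.floor hI')).resolve_right (by linarith [hy.2, hy'.1]))
  have hu : u = u' := eq_of_height_eq (hc.gap.ceil hI) (hc'.gap.ceil hI') <|
    le_antisymm
      ((hc.gap.free x hx u' (hc'.gap.ceil hI')).resolve_left (by linarith [hy.1, hy'.2]))
      ((hc'.gap.free x hx' u (hc.gap.ceil hI)).resolve_left (by linarith [hy.2, hy'.1]))
  subst hl hu
  obtain ⟨hv', hw⟩ := hc.le_X_of_mem_Ioo hc' hx hx'
  obtain ⟨hv, hw'⟩ := hc'.le_X_of_mem_Ioo hc hx' hx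
  exact ⟨eq_of_X_eq (hv.antisymm hv'), eq_of_X_eq (hw.antisymm hw')⟩

lemma eq_pt_of_mem_segments (hc : c.Corridor l u v w) (hc' : c.Corridor l' u' v' w')
    (hz : z ∈ segment ℝ (c.pt v) (c.pt w)) (hz' : z ∈ segment ℝ (c.pt v') (c.pt w')) :
    v = v' ∧ w = w' ∨ ∃ t, (t = v ∨ t = w) ∧ (t = v' ∨ t = w') ∧ z = c.pt t := by
  rcases hc.eq_pt_or_eq_pt_or_strict hz with rfl | rfl | ⟨hx, hy⟩
  · exact Or.inr ⟨v, Or.inl rfl, hc'.eq_or_eq_of_pt_mem_segment hz', rfl⟩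
  · exact Or.inr ⟨w, Or.inr rfl, hc'.eq_or_eq_of_pt_mem_segment hz', rfl⟩
  rcases hc'.eq_pt_or_eq_pt_or_strict hz' with rfl | rfl | ⟨hx', hy'⟩
  · exact Or.inr ⟨v', hc.eq_or_eq_of_pt_mem_segment hz, Or.inl rfl, rfl⟩
  · exact Or.inr ⟨w', hc.eq_or_eq_of_pt_mem_segment hz, Or.inr rfl, rfl⟩
  · exact Or.inl (hc.eq_and_eq_of_strict hc' hx hx' hy hy')

end Corridor

variable (c) in
/-- The pairs of endpoints that may be joined by an edge: the two ends of a segment, and the ends of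
a corridor. -/
def Drawable (v w : ι × Bool) : Prop :=
  (∃ i, v = (i, false) ∧ w = (i, true)) ∨ ∃ l u, c.Corridor l u v w

namespace Drawable

variable {v' w' : ι × Bool}

lemma eq_or_eq_of_pt_mem_segment (h : c.Drawable v w)
    (hv' : c.pt v' ∈ segment ℝ (c.pt v) (c.pt w)) : v' = v ∨ v' = w := by
  rcases h with ⟨i, rfl, rfl⟩ | ⟨l, u, hc⟩
  · obtain rfl := eq_of_mem_segment hv' (pt_mem_segment v')
    rcases v' with ⟨j, _ | _⟩ <;> simp
  · exact hc.eq_or_eq_of_pt_mem_segment hv'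

lemma eq_pt_of_mem_segments (h : c.Drawable v w) (h' : c.Drawable v' w') {z : ℝ × ℝ}
    (hz : z ∈ segment ℝ (c.pt v) (c.pt w)) (hz' : z ∈ segment ℝ (c.pt v') (c.pt w')) :
    v = v' ∧ w = w' ∨ ∃ t, (t = v ∨ t = w) ∧ (t = v' ∨ t = w') ∧ z = c.pt t := by
  have h_end : z = c.pt v ∨ z = c.pt w → v = v' ∧ w = w' ∨
      ∃ t, (t = v ∨ t = w) ∧ (t = v' ∨ t = w') ∧ z = c.pt t := by
    rintro (rfl | rfl)
    · exact Or.inr ⟨v, Or.inl rfl, h'.eq_or_eq_of_pt_mem_segment hz', rfl⟩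
    · exact Or.inr ⟨w, Or.inr rfl, h'.eq_or_eq_of_pt_mem_segment hz', rfl⟩
  have h_end' : z = c.pt v' ∨ z = c.pt w' → v = v' ∧ w = w' ∨
      ∃ t, (t = v ∨ t = w) ∧ (t = v' ∨ t = w') ∧ z = c.pt t := by
    rintro (rfl | rfl)
    · exact Or.inr ⟨v', h.eq_or_eq_of_pt_mem_segment hz, Or.inl rfl, rfl⟩
    · exact Or.inr ⟨w', h.eq_or_eq_of_pt_mem_segment hz, Or.inr rfl, rfl⟩
  rcases h with ⟨i, rfl, rfl⟩ | ⟨l, u, hc⟩ <;> rcases h' with ⟨j, rfl, rfl⟩ | ⟨l', u', hc'⟩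
  · obtain rfl := eq_of_mem_segment hz hz'
    exact Or.inl ⟨rfl, rfl⟩
  · exact h_end' ((hc'.eq_pt_of_mem_segment hz' hz).imp And.left And.left)
  · exact h_end ((hc.eq_pt_of_mem_segment hz hz').imp And.left And.left)
  · exact hc.eq_pt_of_mem_segments hc' hz hz'

end Drawable

lemma drawable_or_drawable_of_adj (h : (endpointMatching ι).Adj v w) :
    c.Drawable v w ∨ c.Drawable w v := by
  obtain rfl := endpointMatching_adj_iff_eq.1 h
  obtain ⟨i, _ | _⟩ := v
  exacts [Or.inl (Or.inl ⟨i, rfl, rfl⟩), Or.inr (Or.inl ⟨i, rfl, rfl⟩)]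

lemma isPlaneDrawing_of_drawable {G : SimpleGraph (ι × Bool)}
    (hG : ∀ v w, G.Adj v w → c.Drawable v w ∨ c.Drawable w v) : IsPlaneDrawing c.pt G where
  inter_subset v w v' w' h h' hne := by
    wlog hd : c.Drawable v w generalizing v w
    · rw [segment_symm, pair_comm]
      exact this w v h.symm (by rwa [Sym2.eq_swap]) ((hG v w h).resolve_left hd)
    wlog hd' : c.Drawable v' w' generalizing v' w'
    · rw [segment_symm ℝ (c.pt v'), pair_comm (c.pt v')]
      exact this w' v' h'.symm (by rwa [Sym2.eq_swap (a := w')]) ((hG v' w' h').resolve_left hd')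
    rintro z ⟨hz, hz'⟩
    rcases hd.eq_pt_of_mem_segments hd' hz hz' with ⟨rfl, rfl⟩ | ⟨t, ht, ht', rfl⟩
    · exact absurd rfl hne
    · exact ⟨ht.imp (congrArg _) (congrArg _), ht'.imp (congrArg _) (congrArg _)⟩
  eq_or_eq v w v' h hv' := by
    rcases hG v w h with hd | hd
    · exact hd.eq_or_eq_of_pt_mem_segment hv'
    · exact (hd.eq_or_eq_of_pt_mem_segment (segment_symm ℝ (c.pt v) _ ▸ hv')).symm

/-! ### The sweep line -/

variable {s : ι} {τ : ℝ} {h : ι × Bool}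

lemma X_left_lt_X (hs : c.X v ∈ c.span s) (hne : s ≠ v.1) : c.X (s, false) < c.X v :=
  hs.1.lt_of_ne fun h => hne (congrArg Prod.fst (eq_of_X_eq h))

variable (c) in
/-- The endpoint `h` sees the vertical line at `τ` through a gap with floor `l` and ceiling `u`. It
may lie on the floor but not on the ceiling. -/
structure Hangs (l u : ι) (h : ι × Bool) (τ : ℝ) : Prop where
  lt : c.X h < τ
  gap : c.IsGap l u (c.X h) τ
  floor_le : c.height l (c.X h) ≤ c.Y h
  lt_ceil : c.Y h < c.height u (c.X h)

variable (c) in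
/-- Segment `u` is the first one met when going upwards from the endpoint `a`. -/
structure IsCeiling (u : ι) (a : ι × Bool) : Prop where
  mem_span : c.X a ∈ c.span u
  lt : c.Y a < c.height u (c.X a)
  le : ∀ s, c.X a ∈ c.span s → c.Y a < c.height s (c.X a) →
    c.height u (c.X a) ≤ c.height s (c.X a)

variable (c) in
/-- The sweep line meets no endpoint strictly between the endpoint `a` and the abscissa `τ`. -/
structure IsStep (a : ι × Bool) (τ : ℝ) : Prop where
  lt : c.X a < τ
  le_or_le : ∀ v, c.X v ≤ c.X a ∨ τ ≤ c.X v

lemma IsCeiling.ne {a : ι × Bool} (hu : c.IsCeiling u a) : u ≠ a.1 := by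
  rintro rfl
  exact hu.lt.ne (height_X a).symm

lemma IsCeiling.unique {a : ι × Bool} (hu : c.IsCeiling u a) (hs : c.IsCeiling s a) : u = s :=
  eq_of_height_eq hu.mem_span hs.mem_span <|
    (hu.le s hs.mem_span hs.lt).antisymm (hs.le u hu.mem_span hu.lt)

namespace IsStep

variable {a : ι × Bool}

lemma Icc_subset_span (hτ : c.IsStep a τ) (hs : c.X a ∈ c.span s) (hne : a ≠ (s, true)) :
    Icc (c.X a) τ ⊆ c.span s := by
  refine Icc_subset_Icc hs.1 ((hτ.le_or_le (s, true)).resolve_left fun h => ?_)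
  exact hne (eq_of_X_eq (hs.2.antisymm h))

lemma Icc_subset_span_of_mem_Ioo (hτ : c.IsStep a τ) (hx : x ∈ Ioo (c.X a) τ)
    (hs : x ∈ c.span s) : Icc (c.X a) τ ⊆ c.span s :=
  Icc_subset_Icc ((hτ.le_or_le (s, false)).resolve_right (hs.1.trans_lt hx.2).not_ge)
    ((hτ.le_or_le (s, true)).resolve_left (hx.1.trans_le hs.2).not_ge)

end IsStep

lemma IsCeiling.Icc_subset_span {a : ι × Bool} (hu : c.IsCeiling u a) (hτ : c.IsStep a τ) :
    Icc (c.X a) τ ⊆ c.span u :=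
  hτ.Icc_subset_span hu.mem_span fun h => hu.ne (congrArg Prod.fst h).symm

namespace Hangs

variable {a : ι × Bool}

lemma height_lt_height (hh : c.Hangs l u h τ) (hx : x ∈ Icc (c.X h) τ) :
    c.height l x < c.height u x := by
  have hX := left_mem_Icc.2 hh.lt.le
  exact height_lt_of_height_lt (hh.gap.floor hX) (hh.gap.ceil hX) (hh.gap.floor hx)
    (hh.gap.ceil hx) (hh.floor_le.trans_lt hh.lt_ceil)

lemma corridor_of_isCeiling (hh : c.Hangs l u h (c.X a)) (hu : c.IsCeiling u a)
    (hne : h.1 ≠ a.1) : c.Corridor l u h a where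
  lt := hh.lt
  ne := hne
  gap := hh.gap
  left := ⟨hh.floor_le, hh.lt_ceil.le⟩
  right := by
    have hX := right_mem_Icc.2 hh.lt.le
    refine ⟨?_, hu.lt.le⟩
    by_contra! hlt
    exact (hh.height_lt_height hX).not_ge (hu.le l (hh.gap.floor hX) hlt)

lemma corridor_of_fst (hh : c.Hangs l a.1 h (c.X a)) : c.Corridor l a.1 h a where
  lt := hh.lt
  ne := fun hne => hh.lt_ceil.ne (hne ▸ height_X h).symm
  gap := hh.gap
  left := ⟨hh.floor_le, hh.lt_ceil.le⟩
  right := by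
    have hlt := hh.height_lt_height (right_mem_Icc.2 hh.lt.le)
    rw [height_X] at hlt
    exact ⟨hlt.le, (height_X a).ge⟩

lemma free_right (hh : c.Hangs l u h (c.X a)) (hs : c.X a ∈ c.span s) (hne : s ≠ a.1) :
    c.height s (c.X a) ≤ c.height l (c.X a) ∨ c.height u (c.X a) ≤ c.height s (c.X a) := by
  obtain ⟨z, hz, hza⟩ := exists_between (max_lt hh.lt (X_left_lt_X hs hne))
  obtain ⟨hhz, hsz⟩ := max_lt_iff.1 hz
  have hzs : z ∈ c.span s := ⟨hsz.le, hza.le.trans hs.2⟩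
  have hzI : z ∈ Icc (c.X h) (c.X a) := ⟨hhz.le, hza.le⟩
  have haI := right_mem_Icc.2 hh.lt.le
  by_contra! hlt
  rcases hh.gap.free z ⟨hhz, hza⟩ s hzs with h | h
  · exact h.not_gt (height_lt_of_height_lt (hh.gap.floor haI) hs (hh.gap.floor hzI) hzs hlt.1)
  · exact h.not_gt (height_lt_of_height_lt hs (hh.gap.ceil haI) hzs (hh.gap.ceil hzI) hlt.2)

lemma Y_lt_or_le_Y (hh : c.Hangs l u h (c.X a)) (hu : ¬ c.IsCeiling u a) :
    c.Y a < c.height l (c.X a) ∨ c.height u (c.X a) ≤ c.Y a := by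
  by_contra! hY
  refine hu ⟨hh.gap.ceil (right_mem_Icc.2 hh.lt.le), hY.2, fun s hs hsY => ?_⟩
  refine (hh.free_right hs ?_).resolve_left (hY.1.trans_lt hsY).not_ge
  rintro rfl
  exact hsY.ne (height_X a).symm

/-- Going past the endpoint `a` only affects the gaps that `a` enters or closes. -/
lemma extend (hh : c.Hangs l u h (c.X a)) (hτ : c.IsStep a τ) (hua : u ≠ a.1)
    (hu : ¬ c.IsCeiling u a) : c.Hangs l u h τ := by
  have haI := right_mem_Icc.2 hh.lt.le
  have hY := hh.Y_lt_or_le_Y hu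
  have hla : l ≠ a.1 := by
    rintro rfl
    have hlt := hh.height_lt_height haI
    rw [height_X] at hY hlt
    exact hY.elim (lt_irrefl _) hlt.not_ge
  have hl := hτ.Icc_subset_span (hh.gap.floor haI) fun h => hla (congrArg Prod.fst h).symm
  have hu' := hτ.Icc_subset_span (hh.gap.ceil haI) fun h => hua (congrArg Prod.fst h).symm
  have hfree : ∀ s, c.X a ∈ c.span s →
      c.height s (c.X a) ≤ c.height l (c.X a) ∨ c.height u (c.X a) ≤ c.height s (c.X a) := by
    intro s hs
    by_cases hsa : s = a.1
    · subst hsa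
      rw [height_X]
      exact hY.imp_left le_of_lt
    · exact hh.free_right hs hsa
  have hI : ∀ {x}, x ∈ Icc (c.X h) τ → x ∈ Icc (c.X h) (c.X a) ∨ x ∈ Icc (c.X a) τ :=
    fun {x} hx => (le_total x (c.X a)).imp (fun h => ⟨hx.1, h⟩) fun h => ⟨h, hx.2⟩
  refine ⟨hh.lt.trans hτ.lt, ⟨fun x hx => ?_, fun x hx => ?_, fun x hx s hs => ?_⟩, hh.floor_le,
    hh.lt_ceil⟩
  · exact (hI hx).elim (fun h => hh.gap.floor h) fun h => hl h
  · exact (hI hx).elim (fun h => hh.gap.ceil h) fun h => hu' h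
  rcases lt_trichotomy x (c.X a) with hxa | rfl | hax
  · exact hh.gap.free x ⟨hx.1, hxa⟩ s hs
  · exact hfree s hs
  · have hsub := hτ.Icc_subset_span_of_mem_Ioo ⟨hax, hx.2⟩ hs
    have hXa := left_mem_Icc.2 hτ.lt.le
    have hxI : x ∈ Icc (c.X a) τ := ⟨hax.le, hx.2.le⟩
    by_contra! hlt
    rcases hfree s (hsub hXa) with h | h
    · exact h.not_gt (height_lt_of_height_lt (hl hxI) hs (hl hXa) (hsub hXa) hlt.1)
    · exact h.not_gt (height_lt_of_height_lt hs (hu' hxI) (hsub hXa) (hu' hXa) hlt.2)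

end Hangs

variable (c) in
/-- Two distinguished segments of the family, one below and one above all the others, and reaching
further both to the left and to the right. -/
structure Frame where
  bot : ι
  top : ι
  X_mem_bot : ∀ v : ι × Bool, v.1 ≠ bot → v.1 ≠ top →
    c.X v ∈ Ioo (c.X (bot, false)) (c.X (bot, true))
  X_mem_top : ∀ v : ι × Bool, v.1 ≠ bot → v.1 ≠ top →
    c.X v ∈ Ioo (c.X (top, false)) (c.X (top, true))
  height_bot_lt : ∀ s ≠ bot, ∀ x ∈ c.span s, x ∈ c.span bot → c.height bot x < c.height s x
  height_lt_top : ∀ s ≠ top, ∀ x ∈ c.span s, x ∈ c.span top → c.height s x < c.height top x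

namespace Frame

variable (F : c.Frame) {a : ι × Bool}

/-- The endpoint `v` belongs neither to the bottom nor to the top segment. -/
def Inner (v : ι × Bool) : Prop := v.1 ≠ F.bot ∧ v.1 ≠ F.top

variable {F}

lemma height_bot_lt_Y (hv : F.Inner v) : c.height F.bot (c.X v) < c.Y v :=
  height_X v ▸ F.height_bot_lt v.1 hv.1 _ (X_mem_span v)
    (Ioo_subset_Icc_self (F.X_mem_bot v hv.1 hv.2))

lemma Y_lt_height_top (hv : F.Inner v) : c.Y v < c.height F.top (c.X v) :=
  height_X v ▸ F.height_lt_top v.1 hv.2 _ (X_mem_span v)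
    (Ioo_subset_Icc_self (F.X_mem_top v hv.1 hv.2))

lemma exists_isCeiling [Finite ι] (ha : F.Inner a) : ∃ u, c.IsCeiling u a := by
  obtain ⟨u, hu, hmin⟩ := exists_min_image
    {s | c.X a ∈ c.span s ∧ c.Y a < c.height s (c.X a)} (fun s => c.height s (c.X a)) (toFinite _)
    ⟨F.top, Ioo_subset_Icc_self (F.X_mem_top a ha.1 ha.2), Y_lt_height_top ha⟩
  exact ⟨u, hu.1, hu.2, fun s hs hsY => hmin s ⟨hs, hsY⟩⟩

lemma exists_hangs [Finite ι] (ha : F.Inner a) (hu : c.IsCeiling u a) (hτ : c.IsStep a τ) :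
    ∃ l, c.Hangs l u a τ := by
  have hXa := left_mem_Icc.2 hτ.lt.le
  have hbot : Icc (c.X a) τ ⊆ c.span F.bot :=
    hτ.Icc_subset_span (Ioo_subset_Icc_self (F.X_mem_bot a ha.1 ha.2))
      fun h => ha.1 (congrArg Prod.fst h)
  obtain ⟨l, ⟨hl, hlY⟩, hmax⟩ := exists_max_image
    {s | Icc (c.X a) τ ⊆ c.span s ∧ c.height s (c.X a) ≤ c.Y a} (fun s => c.height s (c.X a))
    (toFinite _) ⟨F.bot, hbot, (height_bot_lt_Y ha).le⟩
  have hceil := hu.Icc_subset_span hτ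
  refine ⟨l, hτ.lt, ⟨hl, hceil, fun x hx s hs => ?_⟩, hlY, hu.lt⟩
  have hs' := hτ.Icc_subset_span_of_mem_Ioo hx hs
  have hxI := Ioo_subset_Icc_self hx
  by_contra! hlt
  have hls := height_lt_of_height_lt (hl hxI) hs (hl hXa) (hs' hXa) hlt.1
  have hsu := height_lt_of_height_lt hs (hceil hxI) (hs' hXa) (hceil hXa) hlt.2
  rcases le_or_gt (c.height s (c.X a)) (c.Y a) with h | h
  · exact (hmax s ⟨hs', h⟩).not_gt hls
  · exact (hu.le s (hs' hXa) h).not_gt hsu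

end Frame

/-! ### The invariant of the sweep -/

variable (c) in
/-- A stage of the sweep: connectors `G` between the endpoints in `D`, drawn in corridors, and
promises `p` made by endpoints in `D` which can be kept from the sweep line at `τ`. -/
structure Plan (D : Set (ι × Bool)) (τ : ℝ) (G : SimpleGraph (ι × Bool))
    (p : ι → Option (ι × Bool)) : Prop where
  mem : ∀ v w, G.Adj v w → v ∈ D
  drawable : ∀ v w, G.Adj v w → c.Drawable v w ∨ c.Drawable w v
  promise_mem : ∀ u v, p u = some v → v ∈ D
  hangs : ∀ u v, p u = some v → ∃ l, c.Hangs l u v τ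

namespace Plan

variable {D : Set (ι × Bool)} {G : SimpleGraph (ι × Bool)} {p : ι → Option (ι × Bool)}
  {a : ι × Bool}

lemma load_eq_zero (hP : c.Plan D τ G p) (ha : a ∉ D) : load G p a = 0 := by
  have hG : {w | G.Adj a w} = ∅ := eq_empty_of_forall_notMem fun w hw => ha (hP.mem a w hw)
  have hp : {u | p u = some a} = ∅ :=
    eq_empty_of_forall_notMem fun u hu => ha (hP.promise_mem u a hu)
  rw [load, ndeg, hG, hp, ncard_empty, ncard_empty]

lemma advance (hP : c.Plan D (c.X a) G p) (hτ : c.IsStep a τ) (hfst : p a.1 = none)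
    (hu : c.IsCeiling u a) (hpu : p u = none) : c.Plan D τ G p where
  mem := hP.mem
  drawable := hP.drawable
  promise_mem := hP.promise_mem
  hangs i v h := by
    obtain ⟨l, hl⟩ := hP.hangs i v h
    refine ⟨l, hl.extend hτ ?_ fun hi => ?_⟩
    · rintro rfl
      exact Option.some_ne_none v (h.symm.trans hfst)
    · obtain rfl := hu.unique hi
      exact Option.some_ne_none v (h.symm.trans hpu)

variable [DecidableEq ι]

lemma honour (hP : c.Plan D τ G p) (hu : ∀ v, p u = some v → c.Drawable v a) :
    c.Plan (insert a D) τ (honour G p u a) (Function.update p u none) where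
  mem v w h := by
    rcases honour_adj_iff.1 h with h | ⟨-, ⟨hv, -⟩ | ⟨-, rfl⟩⟩
    exacts [Or.inr (hP.mem v w h), Or.inr (hP.promise_mem u v hv), Or.inl rfl]
  drawable v w h := by
    rcases honour_adj_iff.1 h with h | ⟨-, ⟨hv, rfl⟩ | ⟨hw, rfl⟩⟩
    exacts [hP.drawable v w h, Or.inl (hu v hv), Or.inr (hu w hw)]
  promise_mem i v h := Or.inr (hP.promise_mem i v (update_none_eq_some_iff.1 h).2)
  hangs i v h := hP.hangs i v (update_none_eq_some_iff.1 h).2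

lemma cancel (hP : c.Plan D τ G p) (u : ι) : c.Plan D τ G (Function.update p u none) where
  mem := hP.mem
  drawable := hP.drawable
  promise_mem i v h := hP.promise_mem i v (update_none_eq_some_iff.1 h).2
  hangs i v h := hP.hangs i v (update_none_eq_some_iff.1 h).2

lemma issue (hP : c.Plan D τ G p) (ha : a ∈ D) (hu : ∃ l, c.Hangs l u a τ) :
    c.Plan D τ G (Function.update p u (some a)) where
  mem := hP.mem
  drawable := hP.drawable
  promise_mem i v h := by
    by_cases hi : i = u
    · obtain rfl : a = v := by simpa [hi] using h
      exact ha
    · exact hP.promise_mem i v (by simpa [hi] using h)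
  hangs i v h := by
    by_cases hi : i = u
    · obtain rfl : a = v := by simpa [hi] using h
      exact hi ▸ hu
    · exact hP.hangs i v (by simpa [hi] using h)

end Plan

namespace Frame

variable (F : c.Frame) {D : Set (ι × Bool)} {G : SimpleGraph (ι × Bool)}
  {p : ι → Option (ι × Bool)} {a : ι × Bool}

/-- The invariant of the sweep: every endpoint carries at most two connectors, including promised
ones, and every endpoint in `D` is linked to the top segment. -/
structure Invariant (D : Set (ι × Bool)) (τ : ℝ) (G : SimpleGraph (ι × Bool))
    (p : ι → Option (ι × Bool)) : Prop extends c.Plan D τ G p where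
  load_le : ∀ v, load G p v ≤ 2
  reachable : ∀ v ∈ D, (link G p).Reachable v (F.top, false)

variable {F}

variable (F) in
/-- The endpoints to the left of the sweep line at `τ`, except those of the frame. -/
def passed (τ : ℝ) : Set (ι × Bool) := {v | F.Inner v ∧ c.X v < τ}

lemma notMem_passed : a ∉ F.passed (c.X a) := fun h => lt_irrefl _ h.2

lemma passed_eq_insert (ha : F.Inner a) (hτ : c.IsStep a τ) :
    F.passed τ = insert a (F.passed (c.X a)) := by
  ext v
  constructor
  · rintro ⟨hv, hvτ⟩
    rcases ((hτ.le_or_le v).resolve_right hvτ.not_ge).eq_or_lt with h | h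
    exacts [Or.inl (eq_of_X_eq h), Or.inr ⟨hv, h⟩]
  · rintro (rfl | ⟨hv, hva⟩)
    exacts [⟨ha, hτ.lt⟩, ⟨hv, hva.trans hτ.lt⟩]

namespace Invariant

lemma reachable_ceiling (hI : F.Invariant D τ G p) (hD : F.passed (c.X a) ⊆ D) (ha : F.Inner a)
    (hu : c.IsCeiling u a) : (link G p).Reachable (u, false) (F.top, false) := by
  by_cases htop : u = F.top
  · rw [htop]
  refine hI.reachable _ (hD ⟨⟨?_, htop⟩, X_left_lt_X hu.mem_span hu.ne⟩)
  rintro rfl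
  exact (height_bot_lt_Y ha).not_gt hu.lt

variable [Finite ι]

/-- At a left end `a`, the promise of the segment above `a` is kept by joining it to `a`, and
replaced by a promise of `a`. -/
lemma exists_step_left {i : ι} (hI : F.Invariant (F.passed (c.X (i, false))) (c.X (i, false)) G p)
    (ha : F.Inner (i, false)) (hτ : c.IsStep (i, false) τ) :
    ∃ G' p', F.Invariant (insert (i, false) (F.passed (c.X (i, false)))) τ G' p' := by
  classical
  set a : ι × Bool := (i, false)
  obtain ⟨u, hu⟩ := exists_isCeiling ha
  have hdraw : ∀ v, p u = some v → c.Drawable v a := fun v hv => by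
    obtain ⟨l, hl⟩ := hI.hangs u v hv
    refine Or.inr ⟨l, u, hl.corridor_of_isCeiling hu ?_⟩
    rintro rfl
    exact (X_mem_span v).1.not_gt hl.lt
  have hpi : p i = none := Option.eq_none_iff_forall_ne_some.2 fun v hv => by
    obtain ⟨l, hl⟩ := hI.hangs i v hv
    exact (hl.gap.ceil (left_mem_Icc.2 hl.lt.le)).1.not_gt hl.lt
  have hadv := (hI.honour hdraw).advance hτ ((Function.update_of_ne hu.ne.symm ..).trans hpi) hu
    (Function.update_self ..)
  refine ⟨_, _, hadv.issue (mem_insert a _) (exists_hangs ha hu hτ), fun v => ?_, ?_⟩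
  · have hv := (load_update_some_le (u := u) (a := a) (v := v)).trans
      (Nat.add_le_add_right (load_honour_le (G := G) (p := p) (u := u) (a := a)) _)
    split_ifs at hv with hva
    · have hzero := hI.load_eq_zero notMem_passed
      rw [← hva] at hzero
      lia
    · exact hv.trans (hI.load_le v)
  · have hau := reachable_link_promise (G := honour G p u a)
      (Function.update_self u (some a) (Function.update p u none))
    have hlink {x y} := reachable_of_link_honour (G := G) (p := p) (x := x) (y := y)
      (by simpa using link_update_none_le (u := u) (p := Function.update p u none) (some a)) hau
    rintro v (rfl | hv)
    · exact hau.trans (hlink (hI.reachable_ceiling subset_rfl ha hu))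
    · exact hlink (hI.reachable v hv)

/-- At a right end `a`, the promise of the segment ending at `a` is kept by joining it to `a`. -/
lemma exists_honour_right {i : ι} (hI : F.Invariant (F.passed (c.X (i, true))) (c.X (i, true)) G p)
    (ha : F.Inner (i, true)) :
    ∃ G' p', F.Invariant (insert (i, true) (F.passed (c.X (i, true)))) (c.X (i, true)) G' p' ∧
      load G' p' (i, true) ≤ 1 ∧ p' i = none := by
  classical
  set a : ι × Bool := (i, true)
  have hplan := hI.honour (u := i) (a := a) fun v hv => by
    obtain ⟨l, hl⟩ := hI.hangs i v hv
    exact Or.inr ⟨l, i, Hangs.corridor_of_fst (a := a) hl⟩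
  have hload := load_honour_le (G := G) (p := p) (u := i) (a := a) (v := a)
  rw [hI.load_eq_zero notMem_passed, if_pos rfl] at hload
  have hai : (link (honour G p i a) (Function.update p i none)).Reachable a (i, false) :=
    reachable_link_of_fst_eq rfl
  have hlink {x y} := reachable_of_link_honour (x := x) (y := y) le_rfl hai
  refine ⟨_, _, ⟨hplan, fun v => ?_, ?_⟩, hload, Function.update_self ..⟩
  · by_cases hva : v = a
    · exact hva ▸ hload.trans one_le_two
    · exact load_honour_le.trans (by rw [if_neg hva]; exact hI.load_le v)
  · rintro v (rfl | hv)
    · exact hai.trans (hlink (hI.reachable _ ⟨ha, c.left_lt_right i⟩))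
    · exact hlink (hI.reachable v hv)

/-- If the promise of the segment above `a` can be dropped without separating its author from `a`,
then `a` takes the promise over. -/
lemma exists_step_of_reachable [DecidableEq ι] (hI : F.Invariant D (c.X a) G p) (haD : a ∈ D)
    (ha : F.Inner a) (hload : load G p a ≤ 1) (hpa : p a.1 = none)
    (hu : c.IsCeiling u a) (hτ : c.IsStep a τ)
    (hreach : ∀ v, p u = some v → (link G (Function.update p u none)).Reachable v a) :
    ∃ G' p', F.Invariant D τ G' p' := by
  have hadv := (hI.cancel u).advance hτ ((Function.update_of_ne hu.ne.symm ..).trans hpa) hu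
    (Function.update_self ..)
  have hau := reachable_link_promise (G := G)
    (Function.update_self u (some a) (Function.update p u none))
  have hle : link G (Function.update p u none) ≤
      link G (Function.update (Function.update p u none) u (some a)) := by
    simpa using link_update_none_le (u := u) (p := Function.update p u none) (some a)
  refine ⟨_, _, hadv.issue haD (exists_hangs ha hu hτ), fun v => ?_, fun v hv => ?_⟩
  · have hv := (load_update_some_le (u := u) (a := a) (v := v)).trans
      (Nat.add_le_add_right (load_update_none_le (G := G) (p := p) (u := u)) _)
    split_ifs at hv with hva
    · rw [← hva] at hload
      lia
    · exact hv.trans (hI.load_le v)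
  · exact reachable_of_link hle (fun v hv => ((hreach v hv).mono hle).trans hau)
      (hI.reachable v hv)

/-- If dropping the promise of the segment above `a` separates its author from `a`, the promise is
kept by joining its author to `a`. -/
lemma exists_step_of_not_reachable [DecidableEq ι] (hI : F.Invariant D (c.X a) G p) (haD : a ∈ D)
    (hD : F.passed (c.X a) ⊆ D) (ha : F.Inner a) (hload : load G p a ≤ 1) (hpa : p a.1 = none)
    (hu : c.IsCeiling u a) (hτ : c.IsStep a τ) (hv : p u = some v)
    (hreach : ¬ (link G (Function.update p u none)).Reachable v a) :
    ∃ G' p', F.Invariant D τ G' p' := by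
  have hplan := hI.honour (u := u) (a := a) fun w hw => by
    obtain rfl : v = w := Option.some.inj (hv.symm.trans hw)
    obtain ⟨l, hl⟩ := hI.hangs u v hv
    exact Or.inr ⟨l, u, hl.corridor_of_isCeiling hu fun h => hreach (reachable_link_of_fst_eq h)⟩
  rw [insert_eq_of_mem haD] at hplan
  have hadv := hplan.advance hτ ((Function.update_of_ne hu.ne.symm ..).trans hpa) hu
    (Function.update_self ..)
  refine ⟨_, _, hadv, fun w => ?_, fun w hw => ?_⟩
  · have hw := load_honour_le (G := G) (p := p) (u := u) (a := a) (v := w)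
    split_ifs at hw with hwa
    · rw [← hwa] at hload
      lia
    · exact hw.trans (hI.load_le w)
  · have hau : (link G p).Reachable a (u, false) :=
      (hI.reachable a haD).trans (hI.reachable_ceiling hD ha hu).symm
    have hau' := (reachable_or_reachable_of_le_sup_edge (link_le_sup_edge hv) hau).resolve_right
      fun h => hreach h.symm
    exact reachable_of_link_honour le_rfl (hau'.mono (link_mono le_sup_left)) (hI.reachable w hw)

lemma exists_step_right {i : ι} (hI : F.Invariant (F.passed (c.X (i, true))) (c.X (i, true)) G p)
    (ha : F.Inner (i, true)) (hτ : c.IsStep (i, true) τ) :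
    ∃ G' p', F.Invariant (insert (i, true) (F.passed (c.X (i, true)))) τ G' p' := by
  classical
  obtain ⟨u, hu⟩ := exists_isCeiling ha
  obtain ⟨G', p', hI', hload, hpi⟩ := hI.exists_honour_right ha
  by_cases hreach : ∀ v, p' u = some v →
      (link G' (Function.update p' u none)).Reachable v (i, true)
  · exact hI'.exists_step_of_reachable (mem_insert ..) ha hload hpi hu hτ hreach
  · push Not at hreach
    obtain ⟨v, hv, hreach⟩ := hreach
    exact hI'.exists_step_of_not_reachable (mem_insert ..) (subset_insert ..) ha hload hpi hu hτ hv
      hreach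

end Invariant

lemma exists_isStep [Finite ι] (hbot : τ ≤ c.X (F.bot, true)) (htop : τ ≤ c.X (F.top, true))
    (hne : (F.passed τ).Nonempty) : ∃ a, F.Inner a ∧ c.IsStep a τ := by
  obtain ⟨a, ⟨ha, haτ⟩, hmax⟩ := exists_max_image _ c.X (toFinite _) hne
  refine ⟨a, ha, haτ, fun v => ?_⟩
  by_cases hv : F.Inner v
  · exact (lt_or_ge (c.X v) τ).imp_left fun h => hmax v ⟨hv, h⟩
  obtain ⟨s, b⟩ := v
  have hs : s = F.bot ∨ s = F.top := by
    simpa only [Inner, ne_eq, not_and_or, not_not] using hv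
  cases b
  · refine Or.inl ?_
    rcases hs with rfl | rfl
    exacts [(F.X_mem_bot a ha.1 ha.2).1.le, (F.X_mem_top a ha.1 ha.2).1.le]
  · refine Or.inr ?_
    rcases hs with rfl | rfl <;> assumption

lemma invariant_of_passed_eq_empty (h : F.passed τ = ∅) :
    F.Invariant (F.passed τ) τ ⊥ fun _ => none := by
  refine ⟨⟨?_, ?_, ?_, ?_⟩, fun v => ?_, ?_⟩ <;> simp [h, load, ndeg]

lemma exists_invariant [Finite ι] (hbot : τ ≤ c.X (F.bot, true)) (htop : τ ≤ c.X (F.top, true)) :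
    ∃ G p, F.Invariant (F.passed τ) τ G p := by
  induction hn : (F.passed τ).ncard generalizing τ with
  | zero => exact ⟨_, _, invariant_of_passed_eq_empty ((ncard_eq_zero).1 hn)⟩
  | succ n ih =>
    obtain ⟨a, ha, hτ⟩ := exists_isStep hbot htop (nonempty_of_ncard_ne_zero (by lia))
    have hpassed := passed_eq_insert ha hτ
    rw [hpassed, ncard_insert_of_notMem notMem_passed] at hn
    obtain ⟨G, p, hI⟩ := ih (hτ.lt.le.trans hbot) (hτ.lt.le.trans htop) (Nat.succ.inj hn)
    rw [hpassed]
    obtain ⟨i, _ | _⟩ := a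
    exacts [hI.exists_step_left ha hτ, hI.exists_step_right ha hτ]

lemma inner_of_reachable (hG : ∀ v w, G.Adj v w → F.Inner v) (hv : F.Inner v)
    (h : (endpointMatching ι ⊔ G).Reachable v w) : F.Inner w := by
  have hadj : ∀ (x : {x // F.Inner x}) y, (endpointMatching ι ⊔ G).Adj x y →
      y ∈ range ((↑) : {x // F.Inner x} → ι × Bool) := by
    rintro ⟨x, hx⟩ y (hxy | hxy)
    · exact ⟨⟨y, by rwa [Inner, ← hxy.1]⟩, rfl⟩
    · exact ⟨⟨y, hG y x hxy.symm⟩, rfl⟩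
  obtain ⟨⟨w, hw⟩, rfl, -⟩ := exists_reachable_comap hadj (a := ⟨v, hv⟩) h
  exact hw

/-- A promise made below an inner segment, or below the bottom one, has no way to survive. -/
lemma eq_top_of_promise (hP : c.Plan {v | F.Inner v} τ G p) (hτ : ∀ v, F.Inner v → c.X v < τ)
    (hpu : p u = some v) : u = F.top := by
  obtain ⟨l, hl⟩ := hP.hangs u v hpu
  by_contra htop
  refine (hτ (u, true) ⟨?_, htop⟩).not_ge (hl.gap.ceil (right_mem_Icc.2 hl.lt.le)).2
  rintro rfl
  exact hl.lt_ceil.not_gt (height_bot_lt_Y (hP.promise_mem _ v hpu))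

/-- The top segment is linked to the inner ones by at most one edge, a promise, so it can be
removed. -/
lemma Invariant.reachable_of_inner (hI : F.Invariant {v | F.Inner v} τ G p)
    (hτ : ∀ v, F.Inner v → c.X v < τ) (hv : F.Inner v) (hw : F.Inner w) :
    (endpointMatching ι ⊔ G).Reachable v w := by
  classical
  have htop : ∀ x, F.Inner x → ¬ (endpointMatching ι ⊔ G).Reachable x (F.top, false) :=
    fun x hx h => (inner_of_reachable hI.mem hx h).2 rfl
  have hnone : ∀ u, Function.update p F.top none u = none := fun u => by
    refine Option.eq_none_iff_forall_ne_some.2 fun x hx => ?_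
    obtain ⟨hu, hx⟩ := update_none_eq_some_iff.1 hx
    exact hu (eq_top_of_promise hI.toPlan hτ hx)
  rcases hp : p F.top with _ | h
  · rw [Function.update_eq_self_iff.2 hp.symm] at hnone
    exact absurd ((hI.reachable v hv).mono (link_le_of_forall_eq_none hnone)) (htop v hv)
  · have hreach : ∀ x, F.Inner x → (endpointMatching ι ⊔ G).Reachable x h := fun x hx =>
      (reachable_or_reachable_of_le_sup_edge ((link_le_sup_edge hp).trans
        (sup_le_sup_right (link_le_of_forall_eq_none hnone) _)) (hI.reachable x hx)).resolve_left
          (htop x hx)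
    exact (hreach v hv).trans (hreach w hw).symm

variable (F) in
lemma exists_connectors [Finite ι] : ∃ G : SimpleGraph (ι × Bool),
    (∀ v w, G.Adj v w → F.Inner v) ∧ (∀ v w, G.Adj v w → c.Drawable v w ∨ c.Drawable w v) ∧
    (∀ v, ndeg G v ≤ 2) ∧
    ∀ v w, F.Inner v → F.Inner w → (endpointMatching ι ⊔ G).Reachable v w := by
  set τ := min (c.X (F.bot, true)) (c.X (F.top, true))
  have hτ : ∀ v, F.Inner v → c.X v < τ := fun v hv =>
    lt_min (F.X_mem_bot v hv.1 hv.2).2 (F.X_mem_top v hv.1 hv.2).2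
  obtain ⟨G, p, hI⟩ := F.exists_invariant (min_le_left ..) (min_le_right ..)
  have hpassed : F.passed τ = {v | F.Inner v} := ext fun v => and_iff_left_of_imp (hτ v)
  rw [hpassed] at hI
  exact ⟨G, hI.mem, hI.drawable, fun v => (Nat.le_add_right ..).trans (hI.load_le v),
    fun v w hv hw => hI.reachable_of_inner hτ hv hw⟩

end Frame

/-! ### Framing a family -/

section Framing

variable {κ : Type*} {c : SegmentFamily κ} {M : ℝ}

variable (c) in
/-- The endpoints of the family together with those of two horizontal segments at the heights `-M`
and `M`, of different length in order to keep all abscissae distinct. -/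
def framePt (M : ℝ) : (κ ⊕ Bool) × Bool → ℝ × ℝ
  | (.inl i, b) => c.pt (i, b)
  | (.inr false, b) => (cond b M (-M), -M)
  | (.inr true, b) => (cond b (M + 1) (-(M + 1)), M)

lemma abs_fst_lt_and_abs_snd_lt (hM : ∀ v, ‖c.pt v‖ < M) {i : κ} {z : ℝ × ℝ}
    (hz : z ∈ segment ℝ (c.pt (i, false)) (c.pt (i, true))) : |z.1| < M ∧ |z.2| < M := by
  have hball : z ∈ Metric.ball (0 : ℝ × ℝ) M := (convex_ball 0 M).segment_subset
    (mem_ball_zero_iff.2 (hM _)) (mem_ball_zero_iff.2 (hM _)) hz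
  exact max_lt_iff.1 (mem_ball_zero_iff.1 hball)

lemma snd_eq_of_mem_segment_framePt (hM : 0 < M) {t : Bool} {z : ℝ × ℝ}
    (hz : z ∈ segment ℝ (c.framePt M (.inr t, false)) (c.framePt M (.inr t, true))) :
    z.2 = cond t M (-M) := by
  cases t
  · simpa [framePt, chord] using ((mem_segment_iff_chord (by simpa [framePt])).1 hz).2
  · simpa [framePt, chord] using
      ((mem_segment_iff_chord (by simp [framePt]; linarith)).1 hz).2

lemma injective_fst_framePt (hM₀ : 0 < M) (hM : ∀ v, ‖c.pt v‖ < M) :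
    Function.Injective fun v => (c.framePt M v).1 := by
  have habs : ∀ v, |(c.pt v).1| < M := fun v =>
    (abs_fst_lt_and_abs_snd_lt hM (pt_mem_segment v)).1
  rintro ⟨i | t, b⟩ ⟨j | t', b'⟩ h
  · simpa using eq_of_X_eq (c := c) h
  · have := abs_lt.1 (habs (i, b))
    cases t' <;> cases b' <;> simp only [framePt, cond] at h <;> linarith
  · have := abs_lt.1 (habs (j, b'))
    cases t <;> cases b <;> simp only [framePt, cond] at h <;> linarith
  · cases t <;> cases b <;> cases t' <;> cases b' <;> simp only [framePt, cond] at h ⊢ <;> linarith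

variable (c) in
/-- The family `c` together with the two segments of `framePt`. -/
def framed (hM₀ : 0 < M) (hM : ∀ v, ‖c.pt v‖ < M) : SegmentFamily (κ ⊕ Bool) where
  pt := c.framePt M
  left_lt_right := by
    rintro (i | _ | _)
    · exact c.left_lt_right i
    all_goals simp only [framePt, cond]; linarith
  disjoint := by
    rintro (i | t) (j | t') hne <;> refine disjoint_left.2 fun z hz hz' => ?_
    · exact disjoint_left.1 (c.disjoint fun h => hne (congrArg _ h)) hz hz'
    · have := abs_lt.1 (abs_fst_lt_and_abs_snd_lt hM hz).2
      have := snd_eq_of_mem_segment_framePt hM₀ hz'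
      cases t' <;> simp only [cond] at this <;> linarith
    · have := abs_lt.1 (abs_fst_lt_and_abs_snd_lt hM hz').2
      have := snd_eq_of_mem_segment_framePt hM₀ hz
      cases t <;> simp only [cond] at this <;> linarith
    · have h := (snd_eq_of_mem_segment_framePt hM₀ hz).symm.trans
        (snd_eq_of_mem_segment_framePt hM₀ hz')
      cases t <;> cases t' <;> simp only [cond] at h <;> first | exact hne rfl | linarith
  injective_fst := injective_fst_framePt hM₀ hM

variable {hM₀ : 0 < M} {hM : ∀ v, ‖c.pt v‖ < M} {t : Bool}

lemma height_framed_inl_mem_Ioo {i : κ} {x : ℝ} (hx : x ∈ (c.framed hM₀ hM).span (.inl i)) :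
    (c.framed hM₀ hM).height (.inl i) x ∈ Ioo (-M) M :=
  abs_lt.1 (abs_fst_lt_and_abs_snd_lt hM (z := (x, _)) (mem_segment_iff.2 ⟨hx, rfl⟩)).2

lemma height_framed_inr {x : ℝ} (hx : x ∈ (c.framed hM₀ hM).span (.inr t)) :
    (c.framed hM₀ hM).height (.inr t) x = cond t M (-M) :=
  snd_eq_of_mem_segment_framePt (c := c) hM₀ (z := (x, _))
    ((c.framed hM₀ hM).mem_segment_iff.2 ⟨hx, rfl⟩)

variable (c hM₀ hM) in
/-- The two segments added by `framed` form a frame. -/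
def framedFrame : (c.framed hM₀ hM).Frame where
  bot := .inr false
  top := .inr true
  X_mem_bot := by
    rintro ⟨i | _ | _, b⟩ hbot htop
    · exact abs_lt.1 (abs_fst_lt_and_abs_snd_lt hM (pt_mem_segment (i, b))).1
    exacts [absurd rfl hbot, absurd rfl htop]
  X_mem_top := by
    rintro ⟨i | _ | _, b⟩ hbot htop
    · have := abs_lt.1 (abs_fst_lt_and_abs_snd_lt hM (pt_mem_segment (i, b))).1
      exact ⟨(neg_lt_neg (lt_add_one M)).trans this.1, this.2.trans (lt_add_one M)⟩
    exacts [absurd rfl hbot, absurd rfl htop]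
  height_bot_lt := by
    rintro (i | _ | _) hs x hx hbot <;> rw [height_framed_inr hbot]
    · exact (height_framed_inl_mem_Ioo hx).1
    · exact absurd rfl hs
    · rw [height_framed_inr hx]
      simpa using hM₀
  height_lt_top := by
    rintro (i | _ | _) hs x hx htop <;> rw [height_framed_inr htop]
    · exact (height_framed_inl_mem_Ioo hx).2
    · rw [height_framed_inr hx]
      simpa using hM₀
    · exact absurd rfl hs

lemma inner_framedFrame_iff {v : (κ ⊕ Bool) × Bool} :
    (c.framedFrame hM₀ hM).Inner v ↔ v ∈ range (Prod.map Sum.inl id) := by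
  obtain ⟨i | _ | _, b⟩ := v <;> simp [Frame.Inner, framedFrame]

variable (c) in
lemma exists_norm_pt_lt [Finite κ] : ∃ M, 0 < M ∧ ∀ v, ‖c.pt v‖ < M := by
  obtain ⟨M, hM₀, hM⟩ := (finite_range c.pt).isBounded.exists_pos_norm_lt
  exact ⟨M, hM₀, forall_mem_range.1 hM⟩

end Framing

variable (c) in
lemma exists_connected [Finite ι] [Nonempty ι] : ∃ G : SimpleGraph (ι × Bool), G.Connected ∧
    endpointMatching ι ≤ G ∧ (∀ v, ndeg G v ≤ 3) ∧ IsPlaneDrawing c.pt G := by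
  obtain ⟨M, hM₀, hM⟩ := c.exists_norm_pt_lt
  set F := c.framedFrame hM₀ hM
  obtain ⟨G, hmem, hdraw, hdeg, hreach⟩ := F.exists_connectors
  set f : ι × Bool → (ι ⊕ Bool) × Bool := Prod.map Sum.inl id
  have hf : f.Injective := Sum.inl_injective.prodMap Function.injective_id
  have hinner : ∀ v, F.Inner (f v) := fun v => inner_framedFrame_iff.2 (mem_range_self v)
  have hrange : ∀ v y, (endpointMatching _ ⊔ G).Adj (f v) y → y ∈ range f := fun v y h =>
    inner_framedFrame_iff.1 (Frame.inner_of_reachable hmem (hinner v) h.reachable)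
  have hplane : IsPlaneDrawing (c.framed hM₀ hM).pt (endpointMatching _ ⊔ G) :=
    isPlaneDrawing_of_drawable fun v w h => h.elim drawable_or_drawable_of_adj (hdraw v w)
  refine ⟨(endpointMatching _ ⊔ G).comap f, ⟨fun v w => ?_⟩, fun v w h => ?_, fun v => ?_,
    hplane.comap hf⟩
  · obtain ⟨w', hw', hvw⟩ := exists_reachable_comap hrange (hreach _ _ (hinner v) (hinner w))
    rwa [hf hw'] at hvw
  · exact Or.inl ⟨congrArg Sum.inl h.1, hf.ne h.2⟩
  · refine (ndeg_comap_le _ hf v).trans ((ndeg_sup_le ..).trans ?_)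
    rw [ndeg_endpointMatching, Nat.add_comm]
    exact Nat.add_le_add_right (hdeg _) 1

variable (c) in
lemma exists_isTree [Finite ι] [Nonempty ι] : ∃ T : SimpleGraph (ι × Bool), T.IsTree ∧
    endpointMatching ι ≤ T ∧ (∀ v, ndeg T v ≤ 3) ∧ IsPlaneDrawing c.pt T := by
  obtain ⟨G, hG, hle, hdeg, hdraw⟩ := c.exists_connected
  obtain ⟨T, hleT, hTG, hT⟩ := hG.exists_isTree_le_of_le_of_isAcyclic hle isAcyclic_endpointMatching
  exact ⟨T, hT, hleT, fun v => (ndeg_mono hTG v).trans (hdeg v), hdraw.mono hTG⟩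

end SegmentFamily

section Orientation

lemma exists_affineMap_injOn_fst {s : Set (ℝ × ℝ)} (hs : s.Finite) :
    ∃ A : ℝ × ℝ →ᵃ[ℝ] ℝ × ℝ, Function.Injective A ∧ InjOn (fun z => (A z).1) s := by
  obtain ⟨ε, hε⟩ :=
    (hs.image2 (fun p q : ℝ × ℝ => (q.1 - p.1) / (p.2 - q.2)) hs).exists_notMem
  have hext : ∀ {p q : ℝ × ℝ}, p.1 + ε * p.2 = q.1 + ε * q.2 → p.2 = q.2 → p = q :=
    fun h h₂ => Prod.ext (by rw [h₂] at h; exact add_right_cancel h) h₂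
  refine ⟨((LinearMap.fst ℝ ℝ ℝ + ε • LinearMap.snd ℝ ℝ ℝ).prod
    (LinearMap.snd ℝ ℝ ℝ)).toAffineMap, fun p q h => ?_, fun p hp q hq h => ?_⟩
  · have h' : (p.1 + ε * p.2, p.2) = (q.1 + ε * q.2, q.2) := h
    exact hext (Prod.ext_iff.1 h').1 (Prod.ext_iff.1 h').2
  · have h' : p.1 + ε * p.2 = q.1 + ε * q.2 := h
    by_contra hpq
    have h₂ : p.2 - q.2 ≠ 0 := sub_ne_zero.2 fun h₂ => hpq (hext h' h₂)
    exact hε ⟨p, hp, q, hq, (div_eq_iff h₂).2 (by linarith)⟩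

lemma exists_orientation {ι P : Type*} (s : ι → P × P) (f : P → ℝ)
    (hf : ∀ i, f (s i).1 ≠ f (s i).2) : ∃ q : ι × Bool → P, ∀ i,
      f (q (i, false)) < f (q (i, true)) ∧ s(q (i, false), q (i, true)) = s((s i).1, (s i).2) := by
  have hpair : ∀ i, ∃ r : Bool → P, f (r false) < f (r true) ∧
      s(r false, r true) = s((s i).1, (s i).2) := fun i => by
    rcases (hf i).lt_or_gt with h | h
    · exact ⟨fun b => cond b (s i).2 (s i).1, h, rfl⟩
    · exact ⟨fun b => cond b (s i).1 (s i).2, h, Sym2.eq_swap⟩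
  choose r hr using hpair
  exact ⟨fun v => r v.1 v.2, hr⟩

lemma segment_eq_of_sym2_eq {E : Type*} [AddCommGroup E] [Module ℝ E] {a b c d : E}
    (h : s(a, b) = s(c, d)) : segment ℝ a b = segment ℝ c d := by
  rcases Sym2.eq_iff.1 h with ⟨rfl, rfl⟩ | ⟨rfl, rfl⟩
  exacts [rfl, segment_symm ..]

lemma exists_eq_iff_of_sym2_eq {ι P : Type*} {s : ι → P × P} {q : ι × Bool → P}
    (hq : ∀ i, s(q (i, false), q (i, true)) = s((s i).1, (s i).2)) {i : ι} {x : P} :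
    (∃ b, q (i, b) = x) ↔ x = (s i).1 ∨ x = (s i).2 := by
  rw [← Sym2.mem_iff, ← hq, Sym2.mem_iff, Bool.exists_bool, eq_comm, @eq_comm _ x (q (i, true))]

lemma exists_segmentFamily {ι : Type*} [Finite ι] (s : ι → (ℝ × ℝ) × (ℝ × ℝ))
    (hnd : ∀ i, (s i).1 ≠ (s i).2)
    (hdisj : Pairwise fun i j =>
      Disjoint (segment ℝ (s i).1 (s i).2) (segment ℝ (s j).1 (s j).2)) :
    ∃ (c : SegmentFamily ι) (A : ℝ × ℝ →ᵃ[ℝ] ℝ × ℝ) (q : ι × Bool → ℝ × ℝ),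
      Function.Injective A ∧ c.pt = A ∘ q ∧
      ∀ i, s(q (i, false), q (i, true)) = s((s i).1, (s i).2) := by
  obtain ⟨A, hA, hfst⟩ := exists_affineMap_injOn_fst
    ((finite_range fun i => (s i).1).union (finite_range fun i => (s i).2))
  obtain ⟨q, hq⟩ := exists_orientation s (fun z => (A z).1) fun i h =>
    hnd i (hfst (Or.inl ⟨i, rfl⟩) (Or.inr ⟨i, rfl⟩) h)
  have hseg : ∀ i, segment ℝ (q (i, false)) (q (i, true)) = segment ℝ (s i).1 (s i).2 :=
    fun i => segment_eq_of_sym2_eq (hq i).2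
  have hend : ∀ v, q v = (s v.1).1 ∨ q v = (s v.1).2 := fun v =>
    (exists_eq_iff_of_sym2_eq fun i => (hq i).2).1 ⟨v.2, rfl⟩
  have hmem : ∀ v, q v ∈ segment ℝ (s v.1).1 (s v.1).2 := fun v => by
    rcases hend v with h | h <;> rw [h]
    exacts [left_mem_segment .., right_mem_segment ..]
  refine ⟨⟨A ∘ q, fun i => (hq i).1, fun i j hij => ?_, fun v w h => ?_⟩, A, q, hA, rfl,
    fun i => (hq i).2⟩
  · simp only [Function.comp_apply, ← image_segment, hseg]
    exact (hdisj hij).image hA.injOn (subset_univ _) (subset_univ _)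
  · have hvw : q v = q w := hfst ((hend v).imp (fun h => ⟨_, h.symm⟩) fun h => ⟨_, h.symm⟩)
      ((hend w).imp (fun h => ⟨_, h.symm⟩) fun h => ⟨_, h.symm⟩) h
    obtain ⟨i, b⟩ := v
    obtain ⟨j, b'⟩ := w
    obtain rfl : i = j := by
      by_contra hij
      exact disjoint_left.1 (hdisj hij) (hmem (i, b)) (hvw ▸ hmem (j, b'))
    have hlt := (hq i).1
    cases b <;> cases b' <;> first | rfl | simp [hvw] at hlt

theorem exists_isTree_of_disjoint {ι : Type*} [Finite ι] [Nonempty ι]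
    (s : ι → (ℝ × ℝ) × (ℝ × ℝ)) (hnd : ∀ i, (s i).1 ≠ (s i).2)
    (hdisj : Pairwise fun i j =>
      Disjoint (segment ℝ (s i).1 (s i).2) (segment ℝ (s j).1 (s j).2)) :
    ∃ (q : ι × Bool → ℝ × ℝ) (T : SimpleGraph (ι × Bool)), Function.Injective q ∧
      (∀ i, s(q (i, false), q (i, true)) = s((s i).1, (s i).2)) ∧
      T.IsTree ∧ endpointMatching ι ≤ T ∧ (∀ v, ndeg T v ≤ 3) ∧ IsPlaneDrawing q T := by
  obtain ⟨c, A, q, hA, hcq, hq⟩ := exists_segmentFamily s hnd hdisj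
  obtain ⟨T, hT, hle, hdeg, hdraw⟩ := c.exists_isTree
  rw [hcq] at hdraw
  exact ⟨q, T, .of_comp (hcq ▸ c.pt_injective), hq, hT, hle, hdeg, hdraw.of_affineMap_comp hA⟩

end Orientation

theorem binary_encompassing_tree_general (S : Finset ((ℝ × ℝ) × (ℝ × ℝ))) (hS : S.Nonempty)
    (hnd : ∀ s ∈ S, s.1 ≠ s.2)
    (hdisj : ∀ s ∈ S, ∀ t ∈ S, s ≠ t → segment ℝ s.1 s.2 ∩ segment ℝ t.1 t.2 = ∅)
    (V : Set (ℝ × ℝ)) (hV : V = {x | ∃ s ∈ S, x = s.1 ∨ x = s.2}) :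
    ∃ T : SimpleGraph V, T.IsTree ∧
      (∀ s ∈ S, ∃ (h₁ : s.1 ∈ V) (h₂ : s.2 ∈ V), T.Adj ⟨s.1, h₁⟩ ⟨s.2, h₂⟩) ∧
      (∀ v : V, ndeg T v ≤ 3) ∧
      (∀ a b c d : V, T.Adj a b → T.Adj c d →
        ({(a : ℝ × ℝ), (b : ℝ × ℝ)} : Set (ℝ × ℝ)) ≠ {(c : ℝ × ℝ), (d : ℝ × ℝ)} →
        segment ℝ (a : ℝ × ℝ) (b : ℝ × ℝ) ∩ segment ℝ (c : ℝ × ℝ) (d : ℝ × ℝ) ⊆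
          ({(a : ℝ × ℝ), (b : ℝ × ℝ)} ∩ {(c : ℝ × ℝ), (d : ℝ × ℝ)} : Set (ℝ × ℝ))) ∧
      (∀ a b : V, T.Adj a b → ∀ v : V, (v : ℝ × ℝ) ∈ segment ℝ (a : ℝ × ℝ) (b : ℝ × ℝ) →
        (v : ℝ × ℝ) = (a : ℝ × ℝ) ∨ (v : ℝ × ℝ) = (b : ℝ × ℝ)) := by
  have : Nonempty S := hS.to_subtype
  obtain ⟨q, T, hq, hqs, hT, hle, hdeg, hdraw⟩ := exists_isTree_of_disjoint
    (fun s : S => (s : (ℝ × ℝ) × (ℝ × ℝ))) (fun s => hnd s s.2) fun s t hst =>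
      disjoint_iff_inter_eq_empty.2 (hdisj s s.2 t t.2 fun h => hst (Subtype.ext h))
  have hrange : V = range q := by
    ext x
    simp only [hV, mem_range, Prod.exists, exists_eq_iff_of_sym2_eq hqs, Subtype.exists,
      mem_ofPred_eq, exists_prop]
  subst hrange
  let e : S × Bool ≃ range q := Equiv.ofInjective q hq
  have hcoe : q ∘ e.symm = (↑) := funext (Equiv.apply_ofInjective_symm hq)
  have hdraw' : IsPlaneDrawing ((↑) : range q → ℝ × ℝ) (T.comap e.symm) :=
    hcoe ▸ hdraw.comap e.symm.injective
  refine ⟨T.comap e.symm, (SimpleGraph.Iso.comap e.symm T).isTree_iff.2 hT, fun s hs => ?_,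
    fun v => (ndeg_comap_le T e.symm.injective v).trans (hdeg _), fun a b c d hab hcd hne => ?_,
    fun a b hab v hv => ?_⟩
  · have hadj : (T.comap e.symm).Adj (e (⟨s, hs⟩, false)) (e (⟨s, hs⟩, true)) := by
      simpa using hle (endpointMatching_adj_iff_eq (v := (⟨s, hs⟩, false)).2 rfl)
    rcases Sym2.eq_iff.1 (hqs ⟨s, hs⟩) with ⟨h₁, h₂⟩ | ⟨h₂, h₁⟩
    · exact ⟨⟨_, h₁⟩, ⟨_, h₂⟩, by convert hadj using 1 <;> exact Subtype.ext (Eq.symm ‹_›)⟩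
    · exact ⟨⟨_, h₁⟩, ⟨_, h₂⟩, by convert hadj.symm using 1 <;> exact Subtype.ext (Eq.symm ‹_›)⟩
  · refine hdraw'.inter_subset hab hcd fun h => hne ?_
    rcases Sym2.eq_iff.1 h with ⟨rfl, rfl⟩ | ⟨rfl, rfl⟩
    exacts [rfl, pair_comm ..]
  · exact (hdraw'.eq_or_eq hab hv).imp (congrArg _) (congrArg _)

/-- **Encompassing binary trees for disjoint segments** (Bose–Houle–Toussaint).
Let `S` be a finite set of `n ≥ 1` pairwise disjoint nondegenerate closed line segments
in the plane (each segment recorded by its pair of distinct endpoints), with no three of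
the `2n` endpoints collinear.  Then there is a tree `T` on the set `V` of all endpoints
that contains every segment of `S` as an edge, has maximum degree at most `3`, and whose
edges, drawn as closed straight segments, are pairwise non-crossing and contain no
endpoint of `V` other than their own endpoints. -/
theorem binary_encompassing_tree (n : ℕ) (hn : 1 ≤ n) (S : Finset ((ℝ × ℝ) × (ℝ × ℝ)))
    (hcard : S.card = n)
    (hnd : ∀ s ∈ S, s.1 ≠ s.2)
    (hdisj : ∀ s ∈ S, ∀ t ∈ S, s ≠ t →
      segment ℝ s.1 s.2 ∩ segment ℝ t.1 t.2 = ∅)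
    (V : Set (ℝ × ℝ)) (hV : V = {x | ∃ s ∈ S, x = s.1 ∨ x = s.2})
    (hgen : ∀ x ∈ V, ∀ y ∈ V, ∀ z ∈ V, x ≠ y → y ≠ z → x ≠ z →
      ¬ Collinear ℝ ({x, y, z} : Set (ℝ × ℝ))) :
    ∃ T : SimpleGraph V, T.IsTree ∧
      (∀ s ∈ S, ∃ (h₁ : s.1 ∈ V) (h₂ : s.2 ∈ V), T.Adj ⟨s.1, h₁⟩ ⟨s.2, h₂⟩) ∧
      (∀ v : V, ndeg T v ≤ 3) ∧
      (∀ a b c d : V, T.Adj a b → T.Adj c d →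
        ({(a : ℝ × ℝ), (b : ℝ × ℝ)} : Set (ℝ × ℝ)) ≠ {(c : ℝ × ℝ), (d : ℝ × ℝ)} →
        segment ℝ (a : ℝ × ℝ) (b : ℝ × ℝ) ∩ segment ℝ (c : ℝ × ℝ) (d : ℝ × ℝ) ⊆
          ({(a : ℝ × ℝ), (b : ℝ × ℝ)} ∩ {(c : ℝ × ℝ), (d : ℝ × ℝ)} : Set (ℝ × ℝ))) ∧
      (∀ a b : V, T.Adj a b → ∀ v : V, (v : ℝ × ℝ) ∈ segment ℝ (a : ℝ × ℝ) (b : ℝ × ℝ) →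
        (v : ℝ × ℝ) = (a : ℝ × ℝ) ∨ (v : ℝ × ℝ) = (b : ℝ × ℝ)) :=
  binary_encompassing_tree_general S (Finset.card_pos.1 (hcard ▸ hn)) hnd hdisj V hV
end

section
/- Let P be a positively oriented simple polygon with vertex sequence p : ZMod m → ℝ², and let i be an index such that the x-coordinate of p i is strictly smaller than the x-coordinate of every other vertex of P, and such that p (i−1), p i, p (i+1) are not collinear. Then the vertex p i is convex, i.e., the cross product (p i − p (i−1)) × (p (i+1) − p i) is positive. -/
open Set

noncomputable section

/-- A point in the plane. -/
abbrev Pt := ℝ × ℝ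

/-- Cross product of two plane vectors. -/
def cross (u w : Pt) : ℝ := u.1 * w.2 - u.2 * w.1

/-- A simple polygon on `m` vertices: an injective vertex sequence indexed by `ZMod m`
such that consecutive boundary edges meet exactly in their common endpoint and
non-consecutive boundary edges are disjoint. -/
structure SimplePolygon (m : ℕ) where
  p : ZMod m → Pt
  inj : Function.Injective p
  consec : ∀ i : ZMod m,
    segment ℝ (p i) (p (i + 1)) ∩ segment ℝ (p (i + 1)) (p (i + 1 + 1)) = {p (i + 1)}
  disj : ∀ i j : ZMod m, i ≠ j → i + 1 ≠ j → j + 1 ≠ i →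
    segment ℝ (p i) (p (i + 1)) ∩ segment ℝ (p j) (p (j + 1)) = ∅

namespace SimplePolygon

variable {m : ℕ} (P : SimplePolygon m)

/-- The `i`-th closed boundary edge. -/
def edge (i : ZMod m) : Set Pt := segment ℝ (P.p i) (P.p (i + 1))

/-- The boundary of the polygon: the union of its edges. -/
def boundary : Set Pt := ⋃ i : ZMod m, P.edge i

/-- The open bounded region enclosed by the polygon: the union of the bounded
connected components of the complement of the boundary. -/
def openRegion : Set Pt :=
  {x | x ∉ P.boundary ∧ Bornology.IsBounded (connectedComponentIn P.boundaryᶜ x)}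

/-- The set of vertices of the polygon. -/
def vertexSet : Set Pt := Set.range P.p

/-- The signed area of the polygon (shoelace formula). -/
def signedArea : ℝ :=
  (1 / 2) * ∑ i ∈ Finset.range m,
    ((P.p (i : ZMod m)).1 * (P.p ((i : ZMod m) + 1)).2
      - (P.p ((i : ZMod m) + 1)).1 * (P.p (i : ZMod m)).2)

/-- The polygon is positively (counterclockwise) oriented. -/
def PosOriented : Prop := 0 < P.signedArea

/-- For a positively oriented polygon: the vertex `p i` is reflex. -/
def IsReflex (i : ZMod m) : Prop :=
  cross (P.p i - P.p (i - 1)) (P.p (i + 1) - P.p i) < 0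

/-- The set of reflex vertices (as points of the plane). -/
def reflexSet : Set Pt := {x | ∃ i : ZMod m, P.IsReflex i ∧ x = P.p i}

end SimplePolygon

/-! Twice the winding number of the polygon around a point `q` is the sum, over the edges crossing
the vertical line through `q`, of their crossing signs, negated for crossings below `q`. On the
polygon itself this is the mean of the values on the two sides, so it is a constant `W` on all open
edges, and just to the right of the leftmost vertex it is the sign of the turn there.

Suppose the turn is negative, so that `W = -1`. On every generic vertical line, the crossing signs
of the edges at or above any crossing point then have a nonpositive sum, and summation by parts over
the heights shows that the heights weighted by the crossing signs have a nonpositive sum too.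
Integrated over all vertical lines, this sum is the signed area, which is therefore nonpositive.

Vertical edges are removed beforehand by a small horizontal shear, which changes neither cross
products nor the signed area and keeps the leftmost vertex leftmost. -/

open Filter MeasureTheory Topology

theorem sum_apply_add_right {G M : Type*} [AddGroup G] [Fintype G] [AddCommMonoid M] (a : G)
    (g : G → M) : ∑ f, g (f + a) = ∑ f, g f :=
  Equiv.sum_comp (Equiv.addRight a) g

theorem eventually_sign_eq {X α : Type*} [TopologicalSpace X] [Zero α] [LinearOrder α]
    [TopologicalSpace α] [OrderTopology α] {g : X → α} {q₀ : X} (hg : ContinuousAt g q₀)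
    (h : g q₀ ≠ 0) :
    ∀ᶠ q in 𝓝 q₀, SignType.sign (g q) = SignType.sign (g q₀) :=
  ((continuousAt_sign_of_ne_zero h).comp hg).eventually_mem
    ((isOpen_discrete {SignType.sign (g q₀)}).mem_nhds rfl)

theorem exists_mem_uIoo_inter_or_diff {α : Type*} [LinearOrder α] [TopologicalSpace α]
    [OrderTopology α] [DenselyOrdered α] {a x₀ b : α} (ha : a ≠ x₀) (hb : b ≠ x₀) {U : Set α}
    (hU : U ∈ 𝓝 x₀) :
    (∃ x ∈ U, x ∈ uIoo a x₀ ∧ x ∈ uIoo x₀ b) ∨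
      ∃ x ∈ U, ∃ x' ∈ U, (x ∈ uIoo a x₀ ∧ x ∉ uIcc x₀ b) ∧ x' ∈ uIoo x₀ b ∧ x' ∉ uIcc a x₀ := by
  have hleft {c : α} (hc : c < x₀) : ∃ x ∈ U, x ∈ Ioo c x₀ :=
    have := nhdsLT_neBot_of_exists_lt ⟨c, hc⟩
    (eventually_and.2 ⟨mem_nhdsWithin_of_mem_nhds hU, Ioo_mem_nhdsLT hc⟩).exists
  have hright {c : α} (hc : x₀ < c) : ∃ x ∈ U, x ∈ Ioo x₀ c :=
    have := nhdsGT_neBot_of_exists_gt ⟨c, hc⟩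
    (eventually_and.2 ⟨mem_nhdsWithin_of_mem_nhds hU, Ioo_mem_nhdsGT hc⟩).exists
  rcases ha.lt_or_gt with ha | ha <;> rcases hb.lt_or_gt with hb | hb
  · obtain ⟨x, hxU, hx⟩ := hleft (max_lt ha hb)
    exact .inl ⟨x, hxU, by grind [uIoo]⟩
  · obtain ⟨x, hxU, hx⟩ := hleft ha
    obtain ⟨x', hxU', hx'⟩ := hright hb
    exact .inr ⟨x, hxU, x', hxU', by grind [uIoo, uIcc]⟩
  · obtain ⟨x, hxU, hx⟩ := hright ha
    obtain ⟨x', hxU', hx'⟩ := hleft hb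
    exact .inr ⟨x, hxU, x', hxU', by grind [uIoo, uIcc]⟩
  · obtain ⟨x, hxU, hx⟩ := hright (lt_min ha hb)
    exact .inl ⟨x, hxU, by grind [uIoo]⟩

theorem segment_map_inter_segment_map {𝕜 E F : Type*} [Ring 𝕜] [PartialOrder 𝕜]
    [AddRightMono 𝕜] [AddCommGroup E] [AddCommGroup F] [Module 𝕜 E] [Module 𝕜 F] {f : E →ₗ[𝕜] F}
    (hf : Function.Injective f) (a b c d : E) :
    segment 𝕜 (f a) (f b) ∩ segment 𝕜 (f c) (f d) = f '' (segment 𝕜 a b ∩ segment 𝕜 c d) := by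
  rw [image_inter hf]
  exact congrArg₂ (· ∩ ·) (image_segment 𝕜 f.toAffineMap a b).symm
    (image_segment 𝕜 f.toAffineMap c d).symm

theorem sum_mul_sub_nonpos_of_sum_filter_le_nonpos {ι α : Type*} [CommRing α] [LinearOrder α]
    [IsOrderedRing α] {s y : ι → α} {S : Finset ι} {M : α} (hM : ∀ e ∈ S, M ≤ y e)
    (hS : ∀ e ∈ S, M < y e → ∑ f ∈ S with y e ≤ y f, s f ≤ 0) :
    ∑ f ∈ S, s f * (y f - M) ≤ 0 := by
  classical
  induction S using Finset.induction_on_min_value y generalizing M with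
  | empty => simp
  | insert a S haS hmin ih =>
    have haM : M ≤ y a := hM a (Finset.mem_insert_self a S)
    have hrest : ∑ f ∈ S, s f * (y f - y a) ≤ 0 := by
      refine ih hmin fun e he hae => ?_
      simpa [Finset.filter_insert, hae.not_ge] using
        hS e (Finset.mem_insert_of_mem he) (haM.trans_lt hae)
    have hmass : (y a - M) * ∑ f ∈ insert a S, s f ≤ 0 := by
      rcases haM.eq_or_lt with h | h
      · simp [h]
      · have := hS a (Finset.mem_insert_self a S) h
        rw [Finset.filter_true_of_mem (by simpa using hmin)] at this
        exact mul_nonpos_of_nonneg_of_nonpos (sub_nonneg.2 haM) this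
    calc ∑ f ∈ insert a S, s f * (y f - M)
        = ∑ f ∈ insert a S, s f * (y f - y a) + (y a - M) * ∑ f ∈ insert a S, s f := by
          rw [Finset.mul_sum, ← Finset.sum_add_distrib]
          exact Finset.sum_congr rfl fun f _ => by ring
      _ = ∑ f ∈ S, s f * (y f - y a) + (y a - M) * ∑ f ∈ insert a S, s f := by
          rw [Finset.sum_insert haS (f := fun f => s f * (y f - y a)), sub_self, mul_zero, zero_add]
      _ ≤ 0 := add_nonpos hrest hmass

section SignedLevels

variable {ι α : Type*} [Fintype ι] {s : ι → ℤ} {y : ι → α}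

theorem two_mul_sum_filter_le_eq [AddCommGroup α] [LinearOrder α] [IsOrderedAddMonoid α]
    (hinj : InjOn y (Function.support s)) {e : ι} (he : s e ≠ 0) :
    2 * ∑ f with y e ≤ y f, s f = ∑ f, s f + ∑ f, s f * SignType.sign (y f - y e) + s e := by
  classical
  have hterm (f : ι) : 2 * (if y e ≤ y f then s f else 0) =
      s f + s f * SignType.sign (y f - y e) + if f = e then s f else 0 := by
    rcases lt_trichotomy (y e) (y f) with h | h | h
    · have hfe : f ≠ e := by rintro rfl; exact h.false
      simp [h.le, sign_pos (sub_pos.2 h), hfe, two_mul]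
    · by_cases hf : s f = 0
      · simp [hf]
      · obtain rfl := hinj he hf h
        simp [two_mul]
    · have hfe : f ≠ e := by rintro rfl; exact h.false
      simp [h.not_ge, sign_neg (sub_neg.2 h), hfe]
  simp [Finset.sum_filter, Finset.mul_sum, hterm, Finset.sum_add_distrib]

theorem sum_mul_nonpos_of_sum_mul_sign_eq [CommRing α] [LinearOrder α] [IsStrictOrderedRing α]
    (hs : ∑ f, s f = 0) (hs_le : ∀ f, s f ≤ 1) (hinj : InjOn y (Function.support s))
    (hsign : ∀ e, s e ≠ 0 → ∑ f, s f * (SignType.sign (y f - y e) : ℤ) = -1) :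
    ∑ f, (s f : α) * y f ≤ 0 := by
  have hlevel (e : ι) (he : s e ≠ 0) : ∑ f with y e ≤ y f, s f ≤ 0 := by
    have := two_mul_sum_filter_le_eq hinj he
    rw [hs, hsign e he] at this
    linarith [hs_le e]
  obtain ⟨M, hM⟩ := (finite_range y).bddBelow
  have hsupp : ∑ f with (s f : α) ≠ 0, (s f : α) * (y f - M) ≤ 0 := by
    refine sum_mul_sub_nonpos_of_sum_filter_le_nonpos (fun e _ => hM ⟨e, rfl⟩) fun e he _ => ?_
    rw [Finset.filter_comm, Finset.sum_filter_ne_zero]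
    exact_mod_cast hlevel e (by simpa using he)
  calc ∑ f, (s f : α) * y f
      = ∑ f, (s f : α) * (y f - M) := by
        have hs' : ∑ f, (s f : α) = 0 := mod_cast hs
        simp [mul_sub, Finset.sum_sub_distrib, ← Finset.sum_mul, hs']
    _ = ∑ f with (s f : α) ≠ 0, (s f : α) * (y f - M) :=
        (Finset.sum_filter_of_ne fun f _ => left_ne_zero_of_mul).symm
    _ ≤ 0 := hsupp

end SignedLevels

theorem exists_eq_smul_of_cross_eq_zero {u w : Pt} (hu : u ≠ 0) (h : cross u w = 0) :
    ∃ t : ℝ, w = t • u := by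
  have hnorm : u.1 ^ 2 + u.2 ^ 2 ≠ 0 := by
    contrapose! hu
    obtain ⟨h₁, h₂⟩ := (add_eq_zero_iff_of_nonneg (sq_nonneg _) (sq_nonneg _)).1 hu
    exact Prod.ext (eq_zero_of_pow_eq_zero h₁) (eq_zero_of_pow_eq_zero h₂)
  unfold cross at h
  refine ⟨(u.1 * w.1 + u.2 * w.2) / (u.1 ^ 2 + u.2 ^ 2), Prod.ext ?_ ?_⟩ <;>
    simp only [Prod.smul_fst, Prod.smul_snd, smul_eq_mul] <;> field_simp
  · linear_combination -u.2 * h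
  · linear_combination u.1 * h

theorem collinear_of_cross_eq_zero {a b c : Pt} (h : cross (b - a) (c - b) = 0) :
    Collinear ℝ {a, b, c} := by
  rcases eq_or_ne a b with rfl | hab
  · simpa using collinear_pair ℝ a c
  obtain ⟨t, ht⟩ := exists_eq_smul_of_cross_eq_zero (sub_ne_zero.2 hab.symm) h
  rw [collinear_iff_of_mem (p₀ := b) (by simp)]
  refine ⟨b - a, ?_⟩
  simp only [mem_insert_iff, mem_singleton_iff, forall_eq_or_imp, forall_eq]
  exact ⟨⟨-1, by simp⟩, ⟨0, by simp⟩, ⟨t, by simp [← ht]⟩⟩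

section Shear

/-- The horizontal shear `(x, y) ↦ (x + ε y, y)`; small shears bring a polygon into general position
with respect to the vertical direction. -/
def shear (ε : ℝ) : Pt →ₗ[ℝ] Pt :=
  (LinearMap.fst ℝ ℝ ℝ + ε • LinearMap.snd ℝ ℝ ℝ).prod (LinearMap.snd ℝ ℝ ℝ)

@[simp]
theorem shear_apply (ε : ℝ) (q : Pt) : shear ε q = (q.1 + ε * q.2, q.2) := rfl

theorem shear_injective (ε : ℝ) : Function.Injective (shear ε) := by
  rintro ⟨x, y⟩ ⟨x', y'⟩ h
  simp only [shear_apply, Prod.mk.injEq] at h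
  grind

theorem cross_shear (ε : ℝ) (u w : Pt) : cross (shear ε u) (shear ε w) = cross u w := by
  simp only [cross, shear_apply]
  ring

theorem eventually_shear_fst_lt {a b : Pt} (h : a.1 < b.1) :
    ∀ᶠ ε in 𝓝 0, (shear ε a).1 < (shear ε b).1 := by
  have hcont (q : Pt) : ContinuousAt (fun ε => (shear ε q).1) 0 := by
    simp only [shear_apply]
    fun_prop
  exact (hcont a).eventually_lt (hcont b) (by simpa using h)

theorem eventually_shear_fst_ne {a b : Pt} (h : a ≠ b) :
    ∀ᶠ ε in 𝓝[≠] 0, (shear ε a).1 ≠ (shear ε b).1 := by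
  rcases lt_trichotomy a.1 b.1 with hab | hab | hab
  · exact ((eventually_shear_fst_lt hab).filter_mono nhdsWithin_le_nhds).mono fun _ => ne_of_lt
  · filter_upwards [self_mem_nhdsWithin] with ε hε
    have h₂ : a.2 ≠ b.2 := fun h₂ => h (Prod.ext hab h₂)
    have hε₀ : ε ≠ 0 := hε
    simp [hab, h₂, hε₀]
  · exact ((eventually_shear_fst_lt hab).filter_mono nhdsWithin_le_nhds).mono fun _ => ne_of_gt

theorem exists_shear_fst_injective {ι : Type*} [Finite ι] {p : ι → Pt} (hp : Function.Injective p)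
    {i : ι} (hmin : ∀ j, j ≠ i → (p i).1 < (p j).1) :
    ∃ ε, Function.Injective (fun j => (shear ε (p j)).1) ∧
      ∀ j, j ≠ i → (shear ε (p i)).1 < (shear ε (p j)).1 := by
  have hinj : ∀ᶠ ε in 𝓝[≠] 0, ∀ j k, j ≠ k → (shear ε (p j)).1 ≠ (shear ε (p k)).1 :=
    eventually_all.2 fun j => eventually_all.2 fun k => eventually_imp_distrib_left.2 fun hjk =>
      eventually_shear_fst_ne (hp.ne hjk)
  have hleft : ∀ᶠ ε in 𝓝 0, ∀ j, j ≠ i → (shear ε (p i)).1 < (shear ε (p j)).1 :=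
    eventually_all.2 fun j => eventually_imp_distrib_left.2 fun hj =>
      eventually_shear_fst_lt (hmin j hj)
  obtain ⟨ε, hε, hε'⟩ := (hinj.and (hleft.filter_mono nhdsWithin_le_nhds)).exists
  exact ⟨ε, fun j k => not_imp_not.1 (hε j k), hε'⟩

end Shear

section Crossing

/-- The height at abscissa `x` of the line through `a` and `b`. If that line is vertical, division
by zero makes this the constant `a.2`. -/
def lineHeight (a b : Pt) (x : ℝ) : ℝ :=
  a.2 + (x - a.1) * ((b.2 - a.2) / (b.1 - a.1))

/-- The sign with which the edge from `a` to `b` crosses the vertical line at abscissa `x`: `1` for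
a crossing to the left, `-1` for a crossing to the right, `0` for none. An endpoint on the line
counts as lying to its right, so that the signs along a closed polygon telescope. -/
def crossingSign (a b : Pt) (x : ℝ) : ℤ :=
  (if x ≤ a.1 then 1 else 0) - (if x ≤ b.1 then 1 else 0)

/-- The contribution of the edge from `a` to `b` to twice the winding number around `q`: its
crossing sign with the vertical line through `q`, negated below `q` and discarded at `q`. -/
def crossing (a b q : Pt) : ℤ :=
  crossingSign a b q.1 * SignType.sign (lineHeight a b q.1 - q.2)

variable {a b : Pt} {x : ℝ}

@[simp]
theorem lineHeight_left (a b : Pt) : lineHeight a b a.1 = a.2 := by simp [lineHeight]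

theorem lineHeight_right (h : a.1 ≠ b.1) : lineHeight a b b.1 = b.2 := by
  have := sub_ne_zero.2 h.symm
  simp only [lineHeight]
  field_simp
  ring

@[fun_prop]
theorem continuous_lineHeight (a b : Pt) : Continuous (lineHeight a b) := by
  unfold lineHeight
  fun_prop

theorem mem_segment_iff_lineHeight (h : a.1 ≠ b.1) {q : Pt} :
    q ∈ segment ℝ a b ↔ q.1 ∈ uIcc a.1 b.1 ∧ q.2 = lineHeight a b q.1 := by
  have hba := sub_ne_zero.2 h.symm
  have hheight (t : ℝ) : lineHeight a b (a.1 + t * (b.1 - a.1)) = a.2 + t * (b.2 - a.2) := by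
    simp only [lineHeight]
    field_simp
    ring
  rw [← segment_eq_uIcc, segment_eq_image', segment_eq_image']
  constructor
  · rintro ⟨t, ht, rfl⟩
    exact ⟨⟨t, ht, by simp⟩, by simp [hheight]⟩
  · rintro ⟨⟨t, ht, hqx⟩, hqy⟩
    have hqx' : q.1 = a.1 + t * (b.1 - a.1) := by simpa using hqx.symm
    refine ⟨t, ht, Prod.ext (by simp [hqx']) ?_⟩
    simp [hqy, hqx', hheight]

theorem crossingSign_le_one (a b : Pt) (x : ℝ) : crossingSign a b x ≤ 1 := by
  unfold crossingSign
  split_ifs <;> norm_num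

theorem crossingSign_eq_zero (h : x ∉ uIcc a.1 b.1) : crossingSign a b x = 0 := by
  rcases not_or.1 (mem_uIcc.not.1 h) with ⟨h₁, h₂⟩
  unfold crossingSign
  grind

theorem sign_lineHeight_sub_lineHeight {v : Pt} (ha : v.1 < a.1) (hb : v.1 < b.1) (hx : v.1 < x) :
    SignType.sign (lineHeight a v x - lineHeight v b x) =
      SignType.sign (cross (v - a) (b - v)) := by
  have ha' := sub_pos.2 ha
  have hb' := sub_pos.2 hb
  have hva := (sub_neg.2 ha).ne
  have hscale : lineHeight a v x - lineHeight v b x =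
      (x - v.1) / ((a.1 - v.1) * (b.1 - v.1)) * cross (v - a) (b - v) := by
    simp only [lineHeight, cross, Prod.fst_sub, Prod.snd_sub]
    field_simp
    ring
  rw [hscale, sign_mul, sign_pos (div_pos (sub_pos.2 hx) (mul_pos ha' hb')), one_mul]

theorem crossingSign_eq_neg_of_mem_uIoo {v : Pt} (ha : x ∈ uIoo a.1 v.1)
    (hb : x ∈ uIoo v.1 b.1) : crossingSign v b x = -crossingSign a v x := by
  simp only [uIoo, mem_Ioo, inf_lt_iff, lt_sup_iff] at ha hb
  unfold crossingSign
  grind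

theorem mem_uIoo_of_crossingSign_ne_zero (h : crossingSign a b x ≠ 0)
    (ha : a.1 ≠ x) (hb : b.1 ≠ x) : x ∈ uIoo a.1 b.1 := by
  have hx := not_imp_comm.1 crossingSign_eq_zero h
  exact ⟨hx.1.lt_of_ne (by grind), hx.2.lt_of_ne (by grind)⟩

theorem crossing_eq_zero {q : Pt} (h : q.1 ∉ uIcc a.1 b.1) : crossing a b q = 0 := by
  simp [crossing, crossingSign_eq_zero h]

theorem eventually_crossing_eq (h : a.1 ≠ b.1) {q₀ : Pt} (hq₀ : q₀ ∉ segment ℝ a b) :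
    ∀ᶠ q in 𝓝 q₀, crossing a b q =
      crossingSign a b q.1 * SignType.sign (lineHeight a b q₀.1 - q₀.2) := by
  by_cases hx : q₀.1 ∈ uIcc a.1 b.1
  · have hne : lineHeight a b q₀.1 - q₀.2 ≠ 0 := fun h₀ =>
      hq₀ ((mem_segment_iff_lineHeight h).2 ⟨hx, (sub_eq_zero.1 h₀).symm⟩)
    have hcont : Continuous fun q : Pt => lineHeight a b q.1 - q.2 := by fun_prop
    filter_upwards [eventually_sign_eq hcont.continuousAt hne] with q hq
    rw [crossing, hq]
  · have hopen : ∀ᶠ q : Pt in 𝓝 q₀, q.1 ∉ uIcc a.1 b.1 :=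
      continuous_fst.continuousAt.eventually_mem (isClosed_Icc.isOpen_compl.mem_nhds hx)
    filter_upwards [hopen] with q hq
    simp [crossing_eq_zero hq, crossingSign_eq_zero hq]

end Crossing

section ClosedPolygon

variable {m : ℕ} [NeZero m] {p : ZMod m → Pt}

/-- Twice the winding number of the closed polygon `p` around `q`, for `q` off the polygon: edges
crossing the vertical line through `q` are counted above `q` and, negated, below `q`, and these two
counts agree. In the interior of an edge it is the mean of the values on the two sides. -/
def doubleWinding (p : ZMod m → Pt) (q : Pt) : ℤ :=
  ∑ f, crossing (p f) (p (f + 1)) q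

theorem sum_crossingSign_eq_zero (p : ZMod m → Pt) (x : ℝ) :
    ∑ f, crossingSign (p f) (p (f + 1)) x = 0 := by
  simp only [crossingSign, Finset.sum_sub_distrib]
  rw [sum_apply_add_right 1 fun f => if x ≤ (p f).1 then (1 : ℤ) else 0, sub_self]

/-- Summation by parts: a vertex off the vertical line keeps its side, and at a vertex on the line
the two adjacent edges have the same height. -/
theorem eventually_sum_crossingSign_mul_eq (hp : ∀ f, (p f).1 ≠ (p (f + 1)).1) (q₀ : Pt) :
    ∀ᶠ x in 𝓝 q₀.1, ∑ f, crossingSign (p f) (p (f + 1)) x *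
        (SignType.sign (lineHeight (p f) (p (f + 1)) q₀.1 - q₀.2) : ℤ) = doubleWinding p q₀ := by
  set σ : ZMod m → ℤ := fun f => SignType.sign (lineHeight (p f) (p (f + 1)) q₀.1 - q₀.2) with hσ
  set r : ℝ → ZMod m → ℤ := fun x f => if x ≤ (p f).1 then 1 else 0 with hr
  have hparts (x : ℝ) : ∑ f, crossingSign (p f) (p (f + 1)) x * σ f =
      ∑ f, r x (f + 1) * (σ (f + 1) - σ f) := by
    simp only [crossingSign, sub_mul, mul_sub, Finset.sum_sub_distrib]
    rw [sum_apply_add_right 1 fun f => r x f * σ f]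
  have hterm (f : ZMod m) : ∀ᶠ x in 𝓝 q₀.1,
      r x (f + 1) * (σ (f + 1) - σ f) = r q₀.1 (f + 1) * (σ (f + 1) - σ f) := by
    rcases lt_trichotomy q₀.1 (p (f + 1)).1 with h | h | h
    · filter_upwards [gt_mem_nhds h] with x hx
      simp [hr, hx.le, h.le]
    · simp [hσ, h, lineHeight_right (hp f)]
    · filter_upwards [lt_mem_nhds h] with x hx
      simp [hr, hx.not_ge, h.not_ge]
  filter_upwards [eventually_all.2 hterm] with x hx
  calc ∑ f, crossingSign (p f) (p (f + 1)) x * σ f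
      = ∑ f, crossingSign (p f) (p (f + 1)) q₀.1 * σ f := by
        rw [hparts, hparts]
        exact Finset.sum_congr rfl fun f _ => hx f
    _ = doubleWinding p q₀ := rfl

theorem eventually_doubleWinding_eq (hp : ∀ f, (p f).1 ≠ (p (f + 1)).1) {q₀ : Pt}
    {S : Finset (ZMod m)} (hS : ∀ f, q₀ ∈ segment ℝ (p f) (p (f + 1)) ↔ f ∈ S) :
    ∀ᶠ q in 𝓝 q₀, doubleWinding p q =
      doubleWinding p q₀ + ∑ f ∈ S, crossing (p f) (p (f + 1)) q := by
  have hterm (f : ZMod m) : ∀ᶠ q in 𝓝 q₀, crossing (p f) (p (f + 1)) q =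
      crossingSign (p f) (p (f + 1)) q.1 *
        (SignType.sign (lineHeight (p f) (p (f + 1)) q₀.1 - q₀.2) : ℤ) +
      if f ∈ S then crossing (p f) (p (f + 1)) q else 0 := by
    by_cases h : f ∈ S
    · simp [h, ((mem_segment_iff_lineHeight (hp f)).1 ((hS f).2 h)).2]
    · simpa [h] using eventually_crossing_eq (hp f) (mt (hS f).1 h)
  filter_upwards [eventually_all.2 hterm,
    continuous_fst.continuousAt.eventually (eventually_sum_crossingSign_mul_eq hp q₀)] with q hq hq'
  rw [← hq', ← Finset.univ_inter S, ← Finset.sum_ite_mem, ← Finset.sum_add_distrib]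
  exact Finset.sum_congr rfl fun f _ => hq f

end ClosedPolygon

section Area

variable {a b : Pt} {g : ℝ → ℝ} {A B : ℝ}

theorem crossingSign_mul_eq_indicator (a b : Pt) (g : ℝ → ℝ) (x : ℝ) :
    crossingSign a b x * g x =
      {x | x ≤ a.1}.indicator g x - {x | x ≤ b.1}.indicator g x := by
  simp [crossingSign, indicator, sub_mul]

theorem intervalIntegrable_indicator_le (hg : Continuous g) (c : ℝ) :
    IntervalIntegrable ({x | x ≤ c}.indicator g) volume A B :=
  intervalIntegrable_iff.2 <|
    (intervalIntegrable_iff.1 (hg.intervalIntegrable A B)).indicator measurableSet_Iic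

theorem intervalIntegrable_crossingSign_mul (hg : Continuous g) :
    IntervalIntegrable (fun x => crossingSign a b x * g x) volume A B := by
  simp only [crossingSign_mul_eq_indicator]
  exact (intervalIntegrable_indicator_le hg a.1).sub (intervalIntegrable_indicator_le hg b.1)

theorem integral_crossingSign_mul (hg : Continuous g) (ha : a.1 ∈ Icc A B) (hb : b.1 ∈ Icc A B) :
    ∫ x in A..B, crossingSign a b x * g x = ∫ x in b.1..a.1, g x := by
  simp only [crossingSign_mul_eq_indicator]
  rw [intervalIntegral.integral_sub (intervalIntegrable_indicator_le hg a.1)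
      (intervalIntegrable_indicator_le hg b.1), intervalIntegral.integral_indicator ha,
    intervalIntegral.integral_indicator hb, intervalIntegral.integral_interval_sub_left
      (hg.intervalIntegrable _ _) (hg.intervalIntegrable _ _)]

theorem integral_lineHeight (a b : Pt) :
    ∫ x in b.1..a.1, lineHeight a b x = (a.1 - b.1) * (a.2 + b.2) / 2 := by
  rcases eq_or_ne a.1 b.1 with h | h
  · simp [h]
  have hba := sub_ne_zero.2 h.symm
  unfold lineHeight
  rw [intervalIntegral.integral_add (Continuous.intervalIntegrable (by fun_prop) _ _)
    (Continuous.intervalIntegrable (by fun_prop) _ _), intervalIntegral.integral_mul_const,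
    intervalIntegral.integral_sub (Continuous.intervalIntegrable (by fun_prop) _ _)
    (Continuous.intervalIntegrable (by fun_prop) _ _)]
  simp only [intervalIntegral.integral_const, integral_id, smul_eq_mul]
  field_simp
  ring

theorem integral_sum_crossingSign_mul_lineHeight {m : ℕ} [NeZero m] {p : ZMod m → Pt}
    (hp : ∀ f, (p f).1 ∈ Icc A B) :
    ∫ x in A..B, ∑ f, crossingSign (p f) (p (f + 1)) x * lineHeight (p f) (p (f + 1)) x =
      1 / 2 * ∑ f, ((p f).1 * (p (f + 1)).2 - (p (f + 1)).1 * (p f).2) := by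
  rw [intervalIntegral.integral_finsetSum fun f _ =>
    intervalIntegrable_crossingSign_mul (continuous_lineHeight _ _)]
  simp only [integral_crossingSign_mul (continuous_lineHeight _ _) (hp _) (hp _),
    integral_lineHeight]
  have hshift : ∑ f, (p (f + 1)).1 * (p (f + 1)).2 = ∑ f, (p f).1 * (p f).2 :=
    sum_apply_add_right 1 fun f => (p f).1 * (p f).2
  rw [← add_zero (∑ f, ((p f).1 * (p (f + 1)).2 - (p (f + 1)).1 * (p f).2)),
    ← sub_eq_zero.2 hshift.symm, ← Finset.sum_sub_distrib, ← Finset.sum_add_distrib,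
    Finset.mul_sum]
  exact Finset.sum_congr rfl fun f _ => by ring

end Area

namespace SimplePolygon

variable {m : ℕ} {P : SimplePolygon m}

/-- The point at abscissa `x` of the line carrying the `e`-th edge. -/
def edgePoint (P : SimplePolygon m) (e : ZMod m) (x : ℝ) : Pt :=
  (x, lineHeight (P.p e) (P.p (e + 1)) x)

theorem continuous_edgePoint (e : ZMod m) : Continuous (P.edgePoint e) := by
  unfold edgePoint
  fun_prop

theorem eq_add_one_or_eq_add_one_of_mem_edge {e f : ZMod m} (hef : e ≠ f) {q : Pt}
    (he : q ∈ P.edge e) (hf : q ∈ P.edge f) :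
    (f = e + 1 ∧ q = P.p (e + 1)) ∨ (e = f + 1 ∧ q = P.p (f + 1)) := by
  rcases eq_or_ne (e + 1) f with rfl | hef'
  · exact .inl ⟨rfl, (P.consec e).subset ⟨he, hf⟩⟩
  rcases eq_or_ne (f + 1) e with rfl | hfe'
  · exact .inr ⟨rfl, (P.consec f).subset ⟨hf, he⟩⟩
  · exact absurd (P.disj e f hef hef' hfe') (nonempty_iff_ne_empty.1 ⟨q, he, hf⟩)

@[simp]
theorem edgePoint_left (e : ZMod m) : P.edgePoint e (P.p e).1 = P.p e :=
  Prod.ext rfl (lineHeight_left _ _)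

@[simp]
theorem crossing_edgePoint_self (e : ZMod m) (x : ℝ) :
    crossing (P.p e) (P.p (e + 1)) (P.edgePoint e x) = 0 := by
  simp [crossing, edgePoint]

theorem crossing_edgePoint_comm {k : ZMod m} {x : ℝ} (hx : x ∈ uIoo (P.p k).1 (P.p (k + 1)).1)
    (hx' : x ∈ uIoo (P.p (k + 1)).1 (P.p (k + 1 + 1)).1) :
    crossing (P.p k) (P.p (k + 1)) (P.edgePoint (k + 1) x) =
      crossing (P.p (k + 1)) (P.p (k + 1 + 1)) (P.edgePoint k x) := by
  simp only [crossing, edgePoint]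
  rw [crossingSign_eq_neg_of_mem_uIoo hx hx', ← neg_sub (lineHeight _ _ x), Left.sign_neg]
  simp

theorem signedArea_eq_sum [NeZero m] (P : SimplePolygon m) : P.signedArea =
    1 / 2 * ∑ f, ((P.p f).1 * (P.p (f + 1)).2 - (P.p (f + 1)).1 * (P.p f).2) := by
  rw [signedArea]
  congr 1
  refine Finset.sum_nbij' (fun n => (n : ZMod m)) ZMod.val ?_ ?_ ?_ ?_ ?_
  · simp
  · exact fun f _ => Finset.mem_range.2 (ZMod.val_lt f)
  · exact fun n hn => ZMod.val_cast_of_lt (Finset.mem_range.1 hn)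
  · simp
  · exact fun _ _ => rfl

section NoVerticalEdge

variable (hP : ∀ f, (P.p f).1 ≠ (P.p (f + 1)).1)
include hP

theorem edgePoint_right (e : ZMod m) : P.edgePoint e (P.p (e + 1)).1 = P.p (e + 1) :=
  Prod.ext rfl (lineHeight_right (hP e))

theorem edgePoint_mem_edge_iff_mem_uIcc {e : ZMod m} {x : ℝ} :
    P.edgePoint e x ∈ P.edge e ↔ x ∈ uIcc (P.p e).1 (P.p (e + 1)).1 := by
  simp [edge, mem_segment_iff_lineHeight (hP e), edgePoint]

theorem edgePoint_mem_edge_iff_eq {e f : ZMod m} {x : ℝ}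
    (hx : x ∈ uIoo (P.p e).1 (P.p (e + 1)).1) : P.edgePoint e x ∈ P.edge f ↔ f = e := by
  have he : P.edgePoint e x ∈ P.edge e :=
    (edgePoint_mem_edge_iff_mem_uIcc hP).2 (uIoo_subset_uIcc_self hx)
  refine ⟨fun hf => ?_, fun h => h ▸ he⟩
  by_contra hfe
  have hvertex : x = (P.p (e + 1)).1 ∨ x = (P.p e).1 := by
    rcases eq_add_one_or_eq_add_one_of_mem_edge (Ne.symm hfe) he hf with ⟨-, h⟩ | ⟨rfl, h⟩
    · exact .inl (congrArg Prod.fst h)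
    · exact .inr (congrArg Prod.fst h)
  rcases hvertex with rfl | rfl
  · exact right_notMem_uIoo hx
  · exact left_notMem_uIoo hx

theorem vertex_mem_edge_iff {k f : ZMod m} : P.p (k + 1) ∈ P.edge f ↔ f = k ∨ f = k + 1 := by
  constructor
  · intro hf
    by_contra! h
    rcases eq_add_one_or_eq_add_one_of_mem_edge h.1.symm
      (right_mem_segment ℝ (P.p k) (P.p (k + 1))) hf with ⟨h', -⟩ | ⟨rfl, h'⟩
    · exact h.2 h'
    · exact hP _ (congrArg Prod.fst h').symm
  · rintro (rfl | rfl)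
    · exact right_mem_segment ℝ _ _
    · exact left_mem_segment ℝ _ _

variable [NeZero m]

theorem doubleWinding_edgePoint_eq {e : ZMod m} {x y : ℝ}
    (hx : x ∈ uIoo (P.p e).1 (P.p (e + 1)).1) (hy : y ∈ uIoo (P.p e).1 (P.p (e + 1)).1) :
    doubleWinding P.p (P.edgePoint e x) = doubleWinding P.p (P.edgePoint e y) := by
  refine isPreconnected_uIoo.constant (f := fun x => doubleWinding P.p (P.edgePoint e x))
    (fun z hz => ContinuousAt.continuousWithinAt ?_) hx hy
  have hlocal := (continuous_edgePoint (P := P) e).continuousAt.eventually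
    (eventually_doubleWinding_eq (S := {e}) hP (q₀ := P.edgePoint e z)
      fun f => (edgePoint_mem_edge_iff_eq hP hz).trans Finset.mem_singleton.symm)
  refine (continuousAt_const (y := doubleWinding P.p (P.edgePoint e z))).congr ?_
  filter_upwards [hlocal] with w hw
  simpa using hw.symm

theorem eventually_doubleWinding_vertex (k : ZMod m) :
    ∀ᶠ q in 𝓝 (P.p (k + 1)), doubleWinding P.p q = doubleWinding P.p (P.p (k + 1)) +
      (crossing (P.p k) (P.p (k + 1)) q + crossing (P.p (k + 1)) (P.p (k + 1 + 1)) q) := by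
  have hk : k ≠ k + 1 := fun h => hP k (congrArg (fun j => (P.p j).1) h)
  filter_upwards [eventually_doubleWinding_eq (S := {k, k + 1}) hP (q₀ := P.p (k + 1))
    fun f => (vertex_mem_edge_iff hP).trans (by simp)] with q hq
  rwa [Finset.sum_pair hk] at hq

/-- Just before and just after a vertex, only the other edge at that vertex can contribute a change:
if both points lie on the same side of the vertex, their contributions agree because both the
crossing sign and the vertical order get reversed, and otherwise both vanish. -/
theorem exists_doubleWinding_edgePoint_add_one_eq (k : ZMod m) :
    ∃ x ∈ uIoo (P.p k).1 (P.p (k + 1)).1, ∃ x' ∈ uIoo (P.p (k + 1)).1 (P.p (k + 1 + 1)).1,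
      doubleWinding P.p (P.edgePoint k x) = doubleWinding P.p (P.edgePoint (k + 1) x') := by
  have hincoming : Tendsto (P.edgePoint k) (𝓝 (P.p (k + 1)).1) (𝓝 (P.p (k + 1))) :=
    (continuous_edgePoint k).tendsto' _ _ (edgePoint_right hP k)
  have houtgoing : Tendsto (P.edgePoint (k + 1)) (𝓝 (P.p (k + 1)).1) (𝓝 (P.p (k + 1))) :=
    (continuous_edgePoint (k + 1)).tendsto' _ _ (edgePoint_left (k + 1))
  have hnear := eventually_doubleWinding_vertex hP k
  rcases exists_mem_uIoo_inter_or_diff (hP k) (hP (k + 1)).symm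
      ((hincoming.eventually hnear).and (houtgoing.eventually hnear)) with
    ⟨x, ⟨hin, hout⟩, hx, hx'⟩ | ⟨x, ⟨hin, -⟩, x', ⟨-, hout⟩, ⟨hx, hxout⟩, hx', hxin⟩
  · refine ⟨x, hx, x, hx', ?_⟩
    rw [hin, hout, crossing_edgePoint_self, crossing_edgePoint_self, crossing_edgePoint_comm hx hx']
    ring
  · refine ⟨x, hx, x', hx', ?_⟩
    rw [hin, hout, crossing_edgePoint_self, crossing_edgePoint_self,
      crossing_eq_zero hxout, crossing_eq_zero hxin]

theorem doubleWinding_edgePoint_eq_of_mem_uIoo {e f : ZMod m} {x y : ℝ}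
    (hx : x ∈ uIoo (P.p e).1 (P.p (e + 1)).1) (hy : y ∈ uIoo (P.p f).1 (P.p (f + 1)).1) :
    doubleWinding P.p (P.edgePoint e x) = doubleWinding P.p (P.edgePoint f y) := by
  have hsteps (n : ℕ) : ∀ z ∈ uIoo (P.p (e + n)).1 (P.p (e + n + 1)).1,
      doubleWinding P.p (P.edgePoint e x) = doubleWinding P.p (P.edgePoint (e + n) z) := by
    induction n with
    | zero => simpa using fun z hz => doubleWinding_edgePoint_eq hP hx hz
    | succ n ih =>
      intro z hz
      obtain ⟨w, hw, w', hw', hww'⟩ := exists_doubleWinding_edgePoint_add_one_eq hP (e + n)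
      push_cast at hz ⊢
      rw [← add_assoc] at hz ⊢
      rw [ih w hw, hww', doubleWinding_edgePoint_eq hP hw' hz]
  simpa using hsteps (f - e).val y (by simpa using hy)

theorem sum_crossingSign_mul_lineHeight_nonpos {x : ℝ} (hx : ∀ f, (P.p f).1 ≠ x)
    (hW : ∀ e, x ∈ uIoo (P.p e).1 (P.p (e + 1)).1 → doubleWinding P.p (P.edgePoint e x) = -1) :
    ∑ f, crossingSign (P.p f) (P.p (f + 1)) x * lineHeight (P.p f) (P.p (f + 1)) x ≤ 0 := by
  have hmem {e : ZMod m} (he : crossingSign (P.p e) (P.p (e + 1)) x ≠ 0) :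
      x ∈ uIoo (P.p e).1 (P.p (e + 1)).1 :=
    mem_uIoo_of_crossingSign_ne_zero he (hx e) (hx (e + 1))
  refine sum_mul_nonpos_of_sum_mul_sign_eq (sum_crossingSign_eq_zero P.p x)
    (fun f => crossingSign_le_one _ _ _) (fun e he f hf hef => ?_) fun e he => hW e (hmem he)
  have hpoint : P.edgePoint e x = P.edgePoint f x := Prod.ext rfl hef
  exact (edgePoint_mem_edge_iff_eq hP (hmem hf)).1
    (hpoint ▸ (edgePoint_mem_edge_iff_eq hP (hmem he)).2 rfl)

theorem signedArea_nonpos_of_doubleWinding_eq_neg_one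
    (hW : ∀ e x, x ∈ uIoo (P.p e).1 (P.p (e + 1)).1 → doubleWinding P.p (P.edgePoint e x) = -1) :
    P.signedArea ≤ 0 := by
  obtain ⟨A, hA⟩ := (finite_range fun f => (P.p f).1).bddBelow
  obtain ⟨B, hB⟩ := (finite_range fun f => (P.p f).1).bddAbove
  have hp (f : ZMod m) : (P.p f).1 ∈ Icc A B := ⟨hA ⟨f, rfl⟩, hB ⟨f, rfl⟩⟩
  have hgeneric : ∀ᵐ x : ℝ, ∀ f, (P.p f).1 ≠ x :=
    ae_all_iff.2 fun f => by simp [ae_iff]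
  rw [signedArea_eq_sum, ← integral_sum_crossingSign_mul_lineHeight hp]
  rw [← neg_nonneg, ← intervalIntegral.integral_neg]
  refine intervalIntegral.integral_nonneg_of_ae ((hp 0).1.trans (hp 0).2) ?_
  filter_upwards [hgeneric] with x hx
  simpa using sum_crossingSign_mul_lineHeight_nonpos hP hx fun e he => hW e x he

theorem exists_doubleWinding_edgePoint_eq_sign_cross {i : ZMod m}
    (hmin : ∀ j, j ≠ i → (P.p i).1 < (P.p j).1) :
    ∃ x ∈ uIoo (P.p i).1 (P.p (i + 1)).1, doubleWinding P.p (P.edgePoint i x) =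
      SignType.sign (cross (P.p i - P.p (i - 1)) (P.p (i + 1) - P.p i)) := by
  have hnext : i + 1 ≠ i := fun h => hP i (by rw [h])
  have hprev : i - 1 ≠ i := fun h => hP (i - 1) (by rw [sub_add_cancel, h])
  obtain ⟨x, hix, hx⟩ : ∃ x, (P.p i).1 < x ∧ ∀ j, j ≠ i → x < (P.p j).1 := by
    have hnear : ∀ᶠ x in 𝓝[>] (P.p i).1, ∀ j, j ≠ i → x < (P.p j).1 :=
      eventually_all.2 fun j => eventually_imp_distrib_left.2 fun hj =>
        eventually_nhdsWithin_of_eventually_nhds (gt_mem_nhds (hmin j hj))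
    exact (eventually_mem_nhdsWithin.and hnear).exists
  have hright {f : ZMod m} (hf : f ≠ i) (hf' : f + 1 ≠ i) : x ∉ uIcc (P.p f).1 (P.p (f + 1)).1 :=
    notMem_uIcc_of_lt (hx f hf) (hx _ hf')
  refine ⟨x, mem_uIoo_of_lt hix (hx _ hnext), ?_⟩
  calc doubleWinding P.p (P.edgePoint i x)
      = crossing (P.p (i - 1)) (P.p (i - 1 + 1)) (P.edgePoint i x) := by
        refine Fintype.sum_eq_single _ fun f hf => ?_
        rcases eq_or_ne f i with rfl | hfi
        · exact crossing_edgePoint_self f x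
        · exact crossing_eq_zero (hright hfi fun h => hf (eq_sub_of_add_eq h))
    _ = SignType.sign (cross (P.p i - P.p (i - 1)) (P.p (i + 1) - P.p i)) := by
        rw [sub_add_cancel, ← sign_lineHeight_sub_lineHeight (hmin _ hprev) (hmin _ hnext) hix]
        simp [crossing, edgePoint, crossingSign, hix.not_ge, (hx _ hprev).le]

theorem signedArea_nonpos_of_cross_neg {i : ZMod m} (hmin : ∀ j, j ≠ i → (P.p i).1 < (P.p j).1)
    (hneg : cross (P.p i - P.p (i - 1)) (P.p (i + 1) - P.p i) < 0) : P.signedArea ≤ 0 := by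
  obtain ⟨y, hy, hWy⟩ := exists_doubleWinding_edgePoint_eq_sign_cross hP hmin
  rw [sign_neg hneg] at hWy
  exact signedArea_nonpos_of_doubleWinding_eq_neg_one hP fun e x hx =>
    (doubleWinding_edgePoint_eq_of_mem_uIoo hP hx hy).trans hWy

end NoVerticalEdge

/-- The image of a simple polygon under an injective linear map. -/
@[simps]
def map (P : SimplePolygon m) (f : Pt →ₗ[ℝ] Pt) (hf : Function.Injective f) : SimplePolygon m where
  p j := f (P.p j)
  inj := hf.comp P.inj
  consec j := by rw [segment_map_inter_segment_map hf, P.consec, image_singleton]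
  disj j k hjk hjk' hkj' := by
    rw [segment_map_inter_segment_map hf, P.disj j k hjk hjk' hkj', image_empty]

theorem signedArea_map (P : SimplePolygon m) {f : Pt →ₗ[ℝ] Pt} (hf : Function.Injective f)
    (hcross : ∀ u w, cross (f u) (f w) = cross u w) :
    (P.map f hf).signedArea = P.signedArea := by
  simp only [cross, mul_comm (Prod.snd _)] at hcross
  simp only [signedArea, map_p, hcross]

end SimplePolygon

/-- **The strictly leftmost vertex of a positively oriented simple polygon is convex.**
If the `x`-coordinate of `p i` is strictly smaller than that of every other vertex and
`p (i-1), p i, p (i+1)` are not collinear, then the cross product at `p i` is positive. -/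
theorem leftmost_vertex_convex {m : ℕ} (hm : 3 ≤ m) (P : SimplePolygon m)
    (hor : P.PosOriented) (i : ZMod m)
    (hmin : ∀ j : ZMod m, j ≠ i → (P.p i).1 < (P.p j).1)
    (hcol : ¬ Collinear ℝ ({P.p (i - 1), P.p i, P.p (i + 1)} : Set Pt)) :
    0 < cross (P.p i - P.p (i - 1)) (P.p (i + 1) - P.p i) := by
  have : NeZero m := ⟨by omega⟩
  have : Fact (1 < m) := ⟨by omega⟩
  have hcross := mt collinear_of_cross_eq_zero hcol
  by_contra! hle
  obtain ⟨ε, hinj, hmin'⟩ := exists_shear_fst_injective P.inj hmin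
  have harea : (P.map (shear ε) (shear_injective ε)).signedArea ≤ 0 := by
    refine SimplePolygon.signedArea_nonpos_of_cross_neg (fun f => hinj.ne (by simp)) hmin' ?_
    simp only [SimplePolygon.map_p, ← map_sub, cross_shear]
    exact hle.lt_of_ne hcross
  rw [P.signedArea_map _ (cross_shear ε)] at harea
  exact hor.not_ge harea
end
end
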